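/- Let δ > 0 and let u ∈ C²(S² ∩ B_δ(S) \ {S}) be a (−1)-homogeneous axisymmetric solution of the stationary Navier–Stokes equations, and let τ := lim_{x∈S², x→S} |x'| u_θ(x) (which exists and is finite). If τ ≥ 3, then the function |x'| u_φ is constant on S² near S, and there exist functions g₁, g₂, real analytic in a neighborhood of 0 ∈ ℝ, such that |x'| u_θ(x) = g₁(1 + cosθ) and u_r(x) = g₂(1 + cosθ) for all x ∈ S² near S. -/

import Mathlib

noncomputable section

open Real Filter MeasureTheory Metric Topology
open scoped ENNReal InnerProductSpace

abbrev V3 := EuclideanSpace ℝ (Fin 3)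
abbrev V2 := EuclideanSpace ℝ (Fin 2)

/-- standard basis vector in `ℝ³` -/
def e3 (j : Fin 3) : V3 := EuclideanSpace.single j 1

/-- partial derivative `∂_j f` -/
def pd (j : Fin 3) (f : V3 → ℝ) (x : V3) : ℝ := fderiv ℝ f x (e3 j)

/-- Laplacian on `ℝ³` -/
def lap3 (f : V3 → ℝ) (x : V3) : ℝ := ∑ j, pd j (fun y => pd j f y) x

/-- stationary Navier–Stokes equations `-Δu + (u·∇)u + ∇p = 0`, `div u = 0` at `x` -/
def NSEq (u : V3 → V3) (p : V3 → ℝ) (x : V3) : Prop :=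
  (∀ i, - lap3 (fun z => u z i) x + (∑ j, u x j * pd j (fun z => u z i) x) + pd i p x = 0)
  ∧ (∑ j, pd j (fun z => u z j) x) = 0

/-- stationary Euler equations `(u·∇)u + ∇p = 0`, `div u = 0` at `x` -/
def EulerEq (u : V3 → V3) (p : V3 → ℝ) (x : V3) : Prop :=
  (∀ i, (∑ j, u x j * pd j (fun z => u z i) x) + pd i p x = 0)
  ∧ (∑ j, pd j (fun z => u z j) x) = 0

/-- south pole -/
def S3 : V3 := EuclideanSpace.single 2 (-1)
/-- north pole -/
def N3 : V3 := EuclideanSpace.single 2 1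

/-- the unit sphere `S²` -/
def sphere2 : Set V3 := Metric.sphere (0 : V3) 1

/-- the open cone over a subset of the unit sphere -/
def cone3 (Ω : Set V3) : Set V3 := {x : V3 | x ≠ 0 ∧ (‖x‖⁻¹ • x) ∈ Ω}

/-- `|x'| = √(x₁² + x₂²)` -/
def rho (x : V3) : ℝ := Real.sqrt ((x 0) ^ 2 + (x 1) ^ 2)

/-- the `x₃`-axis `{x' = 0}` -/
def axis3 : Set V3 := {x : V3 | x 0 = 0 ∧ x 1 = 0}

/-- `Ω_{a,b,R} = {a < x₃ < b, |x'| < R}` -/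
def OmegaR (a b R : ℝ) : Set V3 := {x : V3 | a < x 2 ∧ x 2 < b ∧ rho x < R}

/-- build a point of `ℝ³` from `x' ∈ ℝ²` and `x₃ ∈ ℝ` -/
def emb (y : V2) (t : ℝ) : V3 := (EuclideanSpace.equiv (Fin 3) ℝ).symm ![y 0, y 1, t]

/-- spherical component `u_r = u · e_r` -/
def uRc (u : V3 → V3) (x : V3) : ℝ := (u x 0 * x 0 + u x 1 * x 1 + u x 2 * x 2) / ‖x‖

/-- spherical component `u_θ = u · e_θ` -/
def uTc (u : V3 → V3) (x : V3) : ℝ :=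
  (u x 0 * x 0 * x 2 + u x 1 * x 1 * x 2) / (‖x‖ * rho x) - u x 2 * rho x / ‖x‖

/-- spherical component `u_φ = u · e_φ` -/
def uPc (u : V3 → V3) (x : V3) : ℝ := (-(u x 0) * x 1 + u x 1 * x 0) / rho x

/-- axisymmetry on a set: the spherical components are independent of the meridian angle -/
def AxisymOn (u : V3 → V3) (Ω : Set V3) : Prop :=
  ∀ x ∈ Ω, ∀ y ∈ Ω, ‖x‖ = ‖y‖ → x 2 = y 2 →
    uRc u x = uRc u y ∧ uTc u x = uTc u y ∧ uPc u x = uPc u y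

/-- spherical frame vector `e_r` -/
def eRv (x : V3) : V3 := ‖x‖⁻¹ • x

/-- spherical frame vector `e_θ` -/
def eThv (x : V3) : V3 := (EuclideanSpace.equiv (Fin 3) ℝ).symm
  ![x 2 * x 0 / (‖x‖ * rho x), x 2 * x 1 / (‖x‖ * rho x), -(rho x) / ‖x‖]

/-- spherical frame vector `e_φ` -/
def ePhv (x : V3) : V3 := (EuclideanSpace.equiv (Fin 3) ℝ).symm ![-(x 1) / rho x, x 0 / rho x, 0]

/-- the spherical cap `S² ∩ B_δ(S) \ {S}` -/
def NSCap (δ : ℝ) : Set V3 := (sphere2 ∩ Metric.ball S3 δ) \ {S3}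

/-- the spherical cap `S² ∩ B_δ(S)` -/
def NSCapFull (δ : ℝ) : Set V3 := sphere2 ∩ Metric.ball S3 δ



theorem mono_of_deriv {G G' : ℝ → ℝ} {b : ℝ}
    (h : ∀ s ∈ Set.Ioc 0 b, HasDerivAt G (G' s) s) (h0 : ∀ s ∈ Set.Ioc 0 b, 0 ≤ G' s) :
    ∀ s ∈ Set.Ioc 0 b, ∀ t ∈ Set.Ioc 0 b, s ≤ t → G s ≤ G t := by
  have : MonotoneOn G (Set.Ioc 0 b) := by
    apply monotoneOn_of_deriv_nonneg (convex_Ioc 0 b)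
    · exact fun s hs => (h s hs).continuousAt.continuousWithinAt
    · intro s hs
      rw [interior_Ioc] at hs
      exact (h s ⟨hs.1, hs.2.le⟩).differentiableAt.differentiableWithinAt
    · intro s hs
      rw [interior_Ioc] at hs
      rw [(h s ⟨hs.1, hs.2.le⟩).deriv]
      exact h0 s ⟨hs.1, hs.2.le⟩
  exact fun s hs t ht hst => this hs ht hst

theorem lemA {G G1 G2 G3 : ℝ → ℝ} {b : ℝ} (hb : 0 < b)
    (h1 : ∀ s ∈ Set.Ioc 0 b, HasDerivAt G (G1 s) s)
    (h2 : ∀ s ∈ Set.Ioc 0 b, HasDerivAt G1 (G2 s) s)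
    (h3 : ∀ s ∈ Set.Ioc 0 b, HasDerivAt G2 (G3 s) s)
    (h0 : ∀ s ∈ Set.Ioc 0 b, 0 ≤ G3 s) :
    ∃ K : ℝ, 0 ≤ K ∧ ∀ s ∈ Set.Ioc 0 b, ∀ t ∈ Set.Ioc 0 b, s ≤ t → G s + K * s ≤ G t + K * t := by
  have hbb : b ∈ Set.Ioc 0 b := ⟨hb, le_rfl⟩
  have k2 := mono_of_deriv h3 h0
  set k := |G2 b| with hk
  have k1 := mono_of_deriv (G := fun s => k * s - G1 s) (G' := fun s => k * 1 - G2 s)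
    (fun s hs => ((hasDerivAt_id s).const_mul k).sub (h2 s hs))
    (fun s hs => by have := k2 s hs b hbb hs.2; have := le_abs_self (G2 b); linarith)
  refine ⟨k * b + |G1 b|, by positivity, ?_⟩
  refine mono_of_deriv (G := fun s => G s + (k * b + |G1 b|) * s)
    (G' := fun s => G1 s + (k * b + |G1 b|) * 1)
    (fun s hs => (h1 s hs).add ((hasDerivAt_id s).const_mul _)) ?_
  intro s hs
  have := k1 s hs b hbb hs.2
  have := neg_abs_le (G1 b)
  have : 0 ≤ k * s := mul_nonneg (abs_nonneg _) hs.1.le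
  linarith

theorem log_bot : Tendsto Real.log (𝓝[>] 0) atBot := Real.tendsto_log_nhdsGT_zero

theorem lemB {U f : ℝ → ℝ} {b c τ : ℝ} (hb : 0 < b) (hc : 0 < c)
    (h : ∀ s ∈ Set.Ioc 0 b, HasDerivAt U (f s) s) (h0 : ∀ s ∈ Set.Ioc 0 b, s * f s ≤ -c)
    (hτ : Tendsto U (𝓝[>] 0) (𝓝 τ)) : False := by
  have hbb : b ∈ Set.Ioc 0 b := ⟨hb, le_rfl⟩
  have k := mono_of_deriv (G := fun s => -U s - c * Real.log s) (G' := fun s => -f s - c * s⁻¹)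
    (fun s hs => (h s hs).neg.sub ((Real.hasDerivAt_log hs.1.ne').const_mul c))
    (fun s hs => by
      have := h0 s hs
      have h1 := hs.1
      have : 0 ≤ (-f s - c * s⁻¹) * s := by
        field_simp; linarith
      exact nonneg_of_mul_nonneg_left this h1)
  have e1 : ∀ᶠ s in 𝓝[>] (0:ℝ), U s < τ + 1 := hτ.eventually (gt_mem_nhds (by linarith))
  have e2 : ∀ᶠ s in 𝓝[>] (0:ℝ), c * Real.log s < -(τ + 1) + (U b + c * Real.log b) :=
    (log_bot.const_mul_atBot hc).eventually (eventually_lt_atBot _)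
  have e3 : ∀ᶠ s in 𝓝[>] (0:ℝ), s ∈ Set.Ioc 0 b := Ioc_mem_nhdsGT hb
  obtain ⟨s, a1, a2, a3⟩ := (e1.and (e2.and e3)).exists
  have := k s a3 b hbb a3.2
  linarith

theorem ev_Ioc {P : ℝ → Prop} (h : ∀ᶠ s in 𝓝[>] (0:ℝ), P s) {e : ℝ} (he : 0 < e) :
    ∃ b, 0 < b ∧ b < e ∧ ∀ s ∈ Set.Ioc 0 b, P s := by
  obtain ⟨d, hd, hP⟩ := mem_nhdsGT_iff_exists_Ioo_subset.1 h
  have hd' : (0:ℝ) < d := hd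
  refine ⟨min d e / 2, by positivity, ?_, ?_⟩
  · have := min_le_right d e; linarith
  · intro s hs
    refine hP ⟨hs.1, ?_⟩
    have := min_le_left d e
    have := lt_min hd' he
    linarith [hs.2]

/-- lower bound for F -/
theorem lemC {U f F : ℝ → ℝ} {b K τ : ℝ} (hb : 0 < b) (hb1 : b ≤ 1) (hK : 0 ≤ K)
    (h : ∀ s ∈ Set.Ioc 0 b, HasDerivAt U (f s) s)
    (hF : ∀ s ∈ Set.Ioc 0 b, F s = s * (2 - s) * f s + 2 * (s - 1) * U s + U s ^ 2 / 2)
    (hmono : ∀ s ∈ Set.Ioc 0 b, ∀ t ∈ Set.Ioc 0 b, s ≤ t → F s + K * s ≤ F t + K * t)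
    (hτ : Tendsto U (𝓝[>] 0) (𝓝 τ)) :
    ∀ s ∈ Set.Ioc 0 b, τ ^ 2 / 2 - 2 * τ - K * s ≤ F s := by
  intro s hs
  by_contra hcon
  push Not at hcon
  obtain ⟨η, hη⟩ : ∃ η, η = τ ^ 2 / 2 - 2 * τ - K * s - F s := ⟨_, rfl⟩
  have hη0 : 0 < η := by linarith
  have hlim : Tendsto (fun t => 2 * (t - 1) * U t + U t ^ 2 / 2) (𝓝[>] 0)
      (𝓝 (2 * (0 - 1) * τ + τ ^ 2 / 2)) := by
    have : Tendsto (fun t : ℝ => t) (𝓝[>] 0) (𝓝 0) := tendsto_nhdsWithin_of_tendsto_nhds tendsto_id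
    exact (((this.sub_const 1).const_mul 2).mul hτ).add ((hτ.pow 2).div_const 2)
  obtain ⟨b', hb', hb's, hP⟩ := ev_Ioc (hlim.eventually (lt_mem_nhds (a := τ^2/2 - 2 * τ - η/2) (by linarith))) hs.1
  refine lemB (c := η / 4) hb' (by positivity) (fun t ht => h t ⟨ht.1, by linarith [ht.2, hs.2]⟩) ?_ hτ
  intro t ht
  have ht1 : t ∈ Set.Ioc 0 b := ⟨ht.1, by linarith [ht.2, hs.2]⟩
  have m := hmono t ht1 s hs (by linarith [ht.2])
  have p := hP t ht
  have e := hF t ht1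
  have : 0 ≤ K * t := mul_nonneg hK ht.1.le
  have h3 : (2 - t) * (t * f t) ≤ -(η / 2) := by nlinarith
  have : t * f t < 0 := by
    by_contra hh
    push Not at hh
    have : 0 ≤ (2 - t) * (t * f t) := mul_nonneg (by linarith [ht1.2]) hh
    linarith
  nlinarith [ht.1]

/-- lower bound for U -/
theorem lemD {U f F : ℝ → ℝ} {b K τ : ℝ} (hb : 0 < b) (hb1 : b ≤ 1) (hK : 0 ≤ K) (hτ3 : 3 ≤ τ)
    (h : ∀ s ∈ Set.Ioc 0 b, HasDerivAt U (f s) s)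
    (hF : ∀ s ∈ Set.Ioc 0 b, F s = s * (2 - s) * f s + 2 * (s - 1) * U s + U s ^ 2 / 2)
    (hlow : ∀ s ∈ Set.Ioc 0 b, τ ^ 2 / 2 - 2 * τ - K * s ≤ F s)
    (hτ : Tendsto U (𝓝[>] 0) (𝓝 τ)) :
    ∃ M, 0 < M ∧ ∃ b', 0 < b' ∧ b' ≤ b ∧ ∀ s ∈ Set.Ioc 0 b', τ - M * s ≤ U s := by
  have hev : ∀ᶠ s in 𝓝[>] (0:ℝ), τ - 1/2 < U s ∧ U s < τ + 1/2 :=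
    (hτ.eventually (lt_mem_nhds (by linarith))).and (hτ.eventually (gt_mem_nhds (by linarith)))
  obtain ⟨b', hb', hbb', hP⟩ := ev_Ioc hev hb
  refine ⟨2 * (K + 2 * τ + 2), by positivity, b', hb', hbb'.le, ?_⟩
  set M := 2 * (K + 2 * τ + 2) with hM
  have hM0 : 0 < M := by positivity
  intro s hs
  by_contra hcon
  push Not at hcon
  -- extended function
  let Z : ℝ → ℝ := fun t => if t ≤ 0 then 0 else U t - τ + M * t
  have hZpos : ∀ t, 0 < t → Z t = U t - τ + M * t := fun t ht => by simp [Z, not_le.2 ht]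
  have hZd : ∀ t ∈ Set.Ioc 0 b, HasDerivAt Z (f t + M * 1) t := by
    intro t ht
    have : HasDerivAt (fun t => U t - τ + M * t) (f t + M * 1) t :=
      ((h t ht).sub_const τ).add ((hasDerivAt_id t).const_mul M)
    refine this.congr_of_eventuallyEq ?_
    filter_upwards [lt_mem_nhds ht.1] with x hx using hZpos x hx
  have hZc : ContinuousOn Z (Set.Icc 0 s) := by
    intro t ht
    rcases eq_or_lt_of_le ht.1 with h0 | h0
    · subst h0
      have : ContinuousWithinAt Z (Set.Ioi 0) 0 := by
        have h1 : Tendsto (fun t => U t - τ + M * t) (𝓝[>] 0) (𝓝 (τ - τ + M * 0)) := by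
          have : Tendsto (fun t : ℝ => t) (𝓝[>] 0) (𝓝 0) :=
            tendsto_nhdsWithin_of_tendsto_nhds tendsto_id
          exact (hτ.sub_const τ).add (this.const_mul M)
        have h2 : Z 0 = τ - τ + M * 0 := by simp [Z]
        rw [ContinuousWithinAt, h2]
        refine h1.congr' ?_
        filter_upwards [self_mem_nhdsWithin] with x hx using (hZpos x hx).symm
      exact (continuousWithinAt_Ioi_iff_Ici.1 this).mono Set.Icc_subset_Ici_self
    · exact (hZd t ⟨h0, by linarith [ht.2, hs.2]⟩).continuousAt.continuousWithinAt
  obtain ⟨m, hm, hmin⟩ := isCompact_Icc.exists_isMinOn (Set.nonempty_Icc.2 hs.1.le) hZc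
  have hms : Z m ≤ Z s := hmin (Set.right_mem_Icc.2 hs.1.le)
  have hZs : Z s < 0 := by rw [hZpos s hs.1]; linarith
  have hm0 : 0 < m := by
    by_contra hh
    have : Z m = 0 := by simp [Z, not_lt.1 hh]
    linarith
  have hmb : m ∈ Set.Ioc 0 b := ⟨hm0, by linarith [hm.2, hs.2]⟩
  have hmb' : m ∈ Set.Ioc 0 b' := ⟨hm0, by linarith [hm.2, hs.2]⟩
  have hZm : U m - τ + M * m < 0 := by rw [← hZpos m hm0]; linarith
  -- derivative positive
  have hfm : 0 ≤ f m := by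
    have e := hF m hmb
    have l := hlow m hmb
    have p := hP m hmb'
    obtain ⟨V, hV⟩ : ∃ V, V = τ - U m := ⟨_, rfl⟩
    have hU : U m = τ - V := by linarith
    rw [hU] at e p hZm
    have key : 0 ≤ m * (2 - m) * f m := by
      have h1 : 1/2 * V ≤ (τ - 2 - V/2) * V := by
        have : 0 < V := by nlinarith
        nlinarith
      have h2 : (τ - V) * m ≤ (τ + 1) * m := by nlinarith
      nlinarith
    have : 0 < m * (2 - m) := mul_pos hm0 (by linarith [hmb.2])
    exact nonneg_of_mul_nonneg_right key this
  have hpos : 0 < f m + M * 1 := by linarith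
  have hsl := (hZd m hmb).hasDerivWithinAt (s := Set.Iio m)
  rw [hasDerivWithinAt_iff_tendsto_slope' (by simp)] at hsl
  have ev1 := hsl.eventually (lt_mem_nhds hpos)
  have ev2 : ∀ᶠ x in 𝓝[<] m, x ∈ Set.Ioo 0 m := Ioo_mem_nhdsLT hm0
  obtain ⟨x, hx1, hx2⟩ := (ev1.and ev2).exists
  have hmx : Z m ≤ Z x := hmin ⟨hx2.1.le, by linarith [hx2.2, hm.2]⟩
  rw [slope_def_field] at hx1
  have : (Z x - Z m) / (x - m) ≤ 0 := div_nonpos_of_nonneg_of_nonpos (by linarith) (by linarith [hx2.2])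
  linarith

theorem lemPos {W1 W2 U : ℝ → ℝ} {b : ℝ} (hb : 0 < b) (hb1 : b ≤ 1)
    (hW1 : ∀ s ∈ Set.Ioc 0 b, HasDerivAt W1 (W2 s) s)
    (hode : ∀ s ∈ Set.Ioc 0 b, s * (2 - s) * W2 s + U s * W1 s = 0)
    (hU : ∀ s ∈ Set.Ioc 0 b, 2 ≤ U s) (hpos : 0 < W1 b) :
    ∀ s ∈ Set.Ioc 0 b, W1 b * b ≤ W1 s * s := by
  have hbb : b ∈ Set.Ioc 0 b := ⟨hb, le_rfl⟩
  have k := mono_of_deriv (G := fun s => -(W1 s ^ 2 * s ^ 2))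
    (G' := fun s => -((2 * W1 s ^ (2 - 1) * W2 s) * s ^ 2 + W1 s ^ 2 * (2 * s ^ (2-1)))) (b := b)
    (fun s hs => by
      have := ((hW1 s hs).pow 2).mul (hasDerivAt_pow 2 s)
      exact this.neg)
    (fun s hs => by
      have e := hode s hs
      have h1 := hs.1
      have h2 : 0 < 2 - s := by linarith [hs.2]
      have : W2 s = -(U s * W1 s) / (s * (2 - s)) := by field_simp; linarith
      have : -((2 * W1 s ^ (2 - 1) * W2 s) * s ^ 2 + W1 s ^ 2 * (2 * s ^ (2-1)))
        = 2 * W1 s ^ 2 * s * (U s - 2 + s) / (2 - s) := by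
        rw [this]; field_simp; ring
      rw [this]
      have := hU s hs
      have : 0 ≤ U s - 2 + s := by linarith
      positivity)
  have hsq : ∀ s ∈ Set.Ioc 0 b, (W1 b * b) ^ 2 ≤ (W1 s * s) ^ 2 := by
    intro s hs
    have := k s hs b hbb hs.2
    nlinarith
  have hbpos : 0 < W1 b * b := mul_pos hpos hb
  have hp : ∀ s ∈ Set.Ioc 0 b, 0 < W1 s := by
    intro s hs
    by_contra hh
    push Not at hh
    have hc : ContinuousOn W1 (Set.Icc s b) := fun t ht =>
      (hW1 t ⟨by linarith [hs.1, ht.1], ht.2⟩).continuousAt.continuousWithinAt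
    obtain ⟨t, ht, h0⟩ := intermediate_value_Icc hs.2 hc ⟨hh, hpos.le⟩
    have := hsq t ⟨by linarith [hs.1, ht.1], ht.2⟩
    rw [h0] at this
    nlinarith
  intro s hs
  exact (sq_le_sq₀ hbpos.le (mul_pos (hp s hs) hs.1).le).1 (hsq s hs)

theorem lemW {U f f1 f2 W W1 W2 : ℝ → ℝ} {b τ : ℝ} (hb : 0 < b) (hb1 : b ≤ 1) (hτ3 : 3 ≤ τ)
    (hU : ∀ s ∈ Set.Ioc 0 b, HasDerivAt U (f s) s)
    (hf : ∀ s ∈ Set.Ioc 0 b, HasDerivAt f (f1 s) s)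
    (hf1 : ∀ s ∈ Set.Ioc 0 b, HasDerivAt f1 (f2 s) s)
    (hW : ∀ s ∈ Set.Ioc 0 b, HasDerivAt W (W1 s) s)
    (hW1 : ∀ s ∈ Set.Ioc 0 b, HasDerivAt W1 (W2 s) s)
    (hode : ∀ s ∈ Set.Ioc 0 b, s * (2 - s) * W2 s + U s * W1 s = 0)
    (hF : ∀ s ∈ Set.Ioc 0 b, HasDerivAt
      (fun s => s * (2 - s) * f2 s + 2 * (1 - s) * f1 s + 2 * f s + f s ^ 2 + U s * f1 s)
      (-2 * W s * W1 s / (s * (2 - s))) s)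
    (hτ : Tendsto U (𝓝[>] 0) (𝓝 τ)) (hU2 : ∀ s ∈ Set.Ioc 0 b, 2 ≤ U s) (hpos : 0 < W1 b) :
    False := by
  have hbb : b ∈ Set.Ioc 0 b := ⟨hb, le_rfl⟩
  have hpW := lemPos hb hb1 hW1 hode hU2 hpos
  set κ := W1 b * b with hκ
  have hκ0 : 0 < κ := mul_pos hpos hb
  have hW1pos : ∀ s ∈ Set.Ioc 0 b, 0 < W1 s := fun s hs =>
    pos_of_mul_pos_left (lt_of_lt_of_le hκ0 (hpW s hs)) hs.1.le
  -- W negative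
  have k := mono_of_deriv (G := fun s => W s - κ * Real.log s) (G' := fun s => W1 s - κ * s⁻¹)
    (b := b) (fun s hs => (hW s hs).sub ((Real.hasDerivAt_log hs.1.ne').const_mul κ))
    (fun s hs => by
      have := hpW s hs
      have h1 := hs.1
      have : 0 ≤ (W1 s - κ * s⁻¹) * s := by
        field_simp; linarith
      exact nonneg_of_mul_nonneg_left this h1)
  have e2 : ∀ᶠ s in 𝓝[>] (0:ℝ), κ * Real.log s < - (W b - κ * Real.log b) :=
    (log_bot.const_mul_atBot hκ0).eventually (eventually_lt_atBot _)
  obtain ⟨b3, hb3, hb3b, hP3⟩ := ev_Ioc e2 hb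
  have sub3 : ∀ s ∈ Set.Ioc 0 b3, s ∈ Set.Ioc 0 b := fun s hs => ⟨hs.1, by linarith [hs.2]⟩
  have hWneg : ∀ s ∈ Set.Ioc 0 b3, W s < 0 := by
    intro s hs
    have := k s (sub3 s hs) b hbb (sub3 s hs).2
    have := hP3 s hs
    linarith
  -- F
  let F : ℝ → ℝ := fun s => s * (2 - s) * f s + 2 * (s - 1) * U s + U s ^ 2 / 2
  let F1 : ℝ → ℝ := fun s => s * (2 - s) * f1 s + 2 * U s + U s * f s
  have hFd : ∀ s ∈ Set.Ioc 0 b, HasDerivAt F (F1 s) s := by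
    intro s hs
    have i := hasDerivAt_id s
    have := (((i.mul (i.const_sub 2)).mul (hf s hs)).add
      (((i.sub_const 1).const_mul 2).mul (hU s hs))).add (((hU s hs).pow 2).div_const 2)
    refine this.congr_deriv ?_
    simp [F1]; ring
  have hFd2 : ∀ s ∈ Set.Ioc 0 b, HasDerivAt F1
      (s * (2 - s) * f2 s + 2 * (1 - s) * f1 s + 2 * f s + f s ^ 2 + U s * f1 s) s := by
    intro s hs
    have i := hasDerivAt_id s
    have := (((i.mul (i.const_sub 2)).mul (hf1 s hs)).add
      ((hU s hs).const_mul 2)).add ((hU s hs).mul (hf s hs))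
    refine this.congr_deriv ?_
    simp; ring
  obtain ⟨K, hK, hKm⟩ := lemA hb3 (fun s hs => hFd s (sub3 s hs)) (fun s hs => hFd2 s (sub3 s hs))
    (fun s hs => hF s (sub3 s hs)) (fun s hs => by
      have h1 := hWneg s hs
      have h2 := hW1pos s (sub3 s hs)
      have h3 := hs.1
      have h4 : 0 < 2 - s := by linarith [(sub3 s hs).2]
      have : -2 * W s * W1 s = 2 * (-W s) * W1 s := by ring
      rw [this]
      have : 0 < - W s := by linarith
      positivity)
  have hC := lemC hb3 (by linarith) hK (fun s hs => hU s (sub3 s hs)) (F := F)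
    (fun s hs => rfl) hKm hτ
  obtain ⟨M, hM, b4, hb4, hb43, hD⟩ := lemD hb3 (by linarith) hK hτ3 (fun s hs => hU s (sub3 s hs))
    (F := F) (fun s hs => rfl) hC hτ
  have sub4 : ∀ s ∈ Set.Ioc 0 b4, s ∈ Set.Ioc 0 b := fun s hs => ⟨hs.1, by linarith [hs.2]⟩
  have h44 : b4 ∈ Set.Ioc 0 b4 := ⟨hb4, le_rfl⟩
  have kk := mono_of_deriv (G := fun s => -(W1 s ^ 2 * s ^ 3 * Real.exp (-M * s)))
    (G' := fun s => W1 s ^ 2 * s ^ 2 * Real.exp (-M * s) * (2 * U s / (2 - s) - 3 + M * s)) (b := b4)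
    (fun s hs => by
      have := ((((hW1 s (sub4 s hs)).pow 2).mul (hasDerivAt_pow 3 s)).mul
        ((hasDerivAt_id s).const_mul (-M)).exp).neg
      refine this.congr_deriv ?_
      have e := hode s (sub4 s hs)
      have h1 := hs.1
      have h2 : 0 < 2 - s := by linarith [(sub4 s hs).2]
      have : W2 s = -(U s * W1 s) / (s * (2 - s)) := by field_simp; linarith
      rw [this]
      simp
      field_simp
      ring)
    (fun s hs => by
      have h2 : 0 < 2 - s := by linarith [(sub4 s hs).2]
      have h5 := hU2 s (sub4 s hs)
      have h6 := hD s hs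
      have : U s ≤ 2 * U s / (2 - s) := by
        rw [le_div_iff₀ h2]; nlinarith [hs.1]
      have : 0 ≤ 2 * U s / (2 - s) - 3 + M * s := by linarith
      positivity)
  obtain ⟨c, hc, hcW⟩ : ∃ c, 0 < c ∧ ∀ s ∈ Set.Ioc 0 b4, c ≤ W1 s * (s * Real.sqrt s) := by
    refine ⟨Real.sqrt (W1 b4 ^ 2 * b4 ^ 3 * Real.exp (-M * b4)), ?_, ?_⟩
    · have := hW1pos b4 (sub4 b4 h44)
      positivity
    · intro s hs
      have h7 := hW1pos s (sub4 s hs)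
      have h8 := hs.1
      rw [Real.sqrt_le_left (by positivity)]
      have := kk s hs b4 h44 hs.2
      have e1 : Real.exp (-M * s) ≤ 1 := by
        apply Real.exp_le_one_iff.2; nlinarith
      have e2 : (W1 s * (s * √s)) ^ 2 = W1 s ^ 2 * s ^ 3 := by
        rw [mul_pow, mul_pow, Real.sq_sqrt hs.1.le]; ring
      rw [e2]
      have : 0 ≤ W1 s ^ 2 * s ^ 3 := by positivity
      nlinarith
  -- W upper bound
  have k5 := mono_of_deriv (G := fun s => W s + 2 * c * (Real.sqrt s)⁻¹)
    (G' := fun s => W1 s - c / (s * Real.sqrt s)) (b := b4)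
    (fun s hs => by
      have h1 := hs.1
      have hs0 : √s ≠ 0 := by positivity
      have := (hW s (sub4 s hs)).add (((Real.hasDerivAt_sqrt h1.ne').inv hs0).const_mul (2 * c))
      refine this.congr_deriv ?_
      rw [Real.sq_sqrt h1.le]
      field_simp
      ring)
    (fun s hs => by
      have h1 := hs.1
      have := hcW s hs
      have h3 : 0 < s * √s := by positivity
      rw [sub_nonneg, div_le_iff₀ h3]
      exact this)
  have e5 : ∀ᶠ s in 𝓝[>] (0:ℝ), W b4 + 2 * c * (Real.sqrt b4)⁻¹ < c * (√s)⁻¹ := by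
    have t1 : Tendsto (fun s : ℝ => √s) (𝓝[>] 0) (𝓝[>] 0) := by
      rw [tendsto_nhdsWithin_iff]
      constructor
      · have : Tendsto (fun s : ℝ => √s) (𝓝 0) (𝓝 (√0)) := Real.continuous_sqrt.tendsto 0
        rw [Real.sqrt_zero] at this
        exact tendsto_nhdsWithin_of_tendsto_nhds this
      · filter_upwards [self_mem_nhdsWithin] with x hx
        exact Real.sqrt_pos.2 hx
    exact ((tendsto_inv_nhdsGT_zero.comp t1).const_mul_atTop hc).eventually (eventually_gt_atTop _)
  obtain ⟨b6, hb6, hb64, hP6⟩ := ev_Ioc e5 hb4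
  have sub6 : ∀ s ∈ Set.Ioc 0 b6, s ∈ Set.Ioc 0 b4 := fun s hs => ⟨hs.1, by linarith [hs.2]⟩
  have hWle : ∀ s ∈ Set.Ioc 0 b6, c * (√s)⁻¹ ≤ - W s := by
    intro s hs
    have := k5 s (sub6 s hs) b4 h44 (sub6 s hs).2
    have := hP6 s hs
    linarith
  have hF3 : ∀ s ∈ Set.Ioc 0 b6, c ^ 2 / s ^ 3 ≤ -2 * W s * W1 s / (s * (2 - s)) := by
    intro s hs
    have h1 := hs.1
    have h2 : 0 < 2 - s := by linarith [(sub4 s (sub6 s hs)).2]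
    have p1 := hWle s hs
    have p2 := hcW s (sub6 s hs)
    have h3 : 0 < √s := by positivity
    have p1' : c ≤ (-W s) * √s := by
      have := mul_le_mul_of_nonneg_right p1 h3.le
      rwa [mul_assoc, inv_mul_cancel₀ h3.ne', mul_one] at this
    have p3 : c * c ≤ ((-W s) * √s) * (W1 s * (s * √s)) :=
      mul_le_mul p1' p2 hc.le (by linarith)
    have p4 : ((-W s) * √s) * (W1 s * (s * √s)) = (-W s * W1 s) * s ^ 2 := by
      have := Real.mul_self_sqrt h1.le
      linear_combination (-W s * W1 s * s) * this
    rw [p4] at p3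
    have p5 : 0 ≤ -W s * W1 s * s ^ 2 := by nlinarith
    rw [div_le_div_iff₀ (by positivity) (by positivity)]
    have : c ^ 2 * (s * (2 - s)) ≤ 2 * (c * c) * s := by nlinarith [mul_pos (mul_pos hc hc) (mul_pos h1 h1)]
    calc c ^ 2 * (s * (2 - s)) ≤ 2 * (c * c) * s := this
      _ ≤ 2 * (-W s * W1 s * s ^ 2) * s := by nlinarith
      _ = _ := by ring
  obtain ⟨K2, hK2, hKm2⟩ := lemA (G := fun s => F s - c ^ 2 / 2 * Real.log s)
    (G1 := fun s => F1 s - c ^ 2 / 2 * s⁻¹)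
    (G2 := fun s => (s * (2 - s) * f2 s + 2 * (1 - s) * f1 s + 2 * f s + f s ^ 2 + U s * f1 s)
      - c ^ 2 / 2 * (- (s ^ 2)⁻¹))
    (G3 := fun s => -2 * W s * W1 s / (s * (2 - s)) - c ^ 2 / s ^ 3) hb6
    (fun s hs => (hFd s (sub4 s (sub6 s hs))).sub ((Real.hasDerivAt_log hs.1.ne').const_mul _))
    (fun s hs => (hFd2 s (sub4 s (sub6 s hs))).sub ((hasDerivAt_inv hs.1.ne').const_mul _))
    (fun s hs => by
      have h1 := hs.1
      have := (hF s (sub4 s (sub6 s hs))).sub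
        ((((hasDerivAt_pow 2 s).inv (by positivity)).neg).const_mul (c ^ 2 / 2))
      refine this.congr_deriv ?_
      simp
      field_simp
      ring)
    (fun s hs => by have := hF3 s hs; linarith)
  have h66 : b6 ∈ Set.Ioc 0 b6 := ⟨hb6, le_rfl⟩
  have e7 : ∀ᶠ s in 𝓝[>] (0:ℝ), c ^ 2 / 2 * Real.log s <
      τ ^ 2 / 2 - 2 * τ - K - (F b6 - c ^ 2 / 2 * Real.log b6 + K2 * b6) :=
    (log_bot.const_mul_atBot (by positivity)).eventually (eventually_lt_atBot _)
  obtain ⟨b7, hb7, hb76, hP7⟩ := ev_Ioc e7 hb6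
  have a1 := hP7 b7 ⟨hb7, le_rfl⟩
  have a2 := hKm2 b7 ⟨hb7, hb76.le⟩ b6 h66 hb76.le
  have a3 := hC b7 ⟨hb7, by linarith⟩
  have : 0 ≤ K2 * b7 := by positivity
  have : K * b7 ≤ K := by
    have : b7 ≤ 1 := by linarith
    nlinarith
  linarith


noncomputable def ps (c : ℕ → ℝ) (s : ℝ) : ℝ := ∑' n, c n * s ^ n

theorem ps_analytic {c : ℕ → ℝ} {R : ℝ} (hR : 0 < R) (hc : ∀ n, |c n| ≤ R ^ n) :
    AnalyticOnNhd ℝ (ps c) (Metric.ball 0 R⁻¹) := by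
  let p := FormalMultilinearSeries.ofScalars ℝ c
  obtain ⟨q, hq⟩ : ∃ q : NNReal, (q : ℝ) = R⁻¹ := ⟨⟨R⁻¹, by positivity⟩, rfl⟩
  have hr : (q : ENNReal) ≤ p.radius := by
    apply p.le_radius_of_bound 1
    intro n
    rw [FormalMultilinearSeries.ofScalars_norm]
    have := hc n
    rw [Real.norm_eq_abs, hq, inv_pow, ← div_eq_mul_inv, div_le_one (by positivity)]
    exact this
  have hpos : 0 < p.radius := lt_of_lt_of_le (by
    rw [ENNReal.coe_pos, ← NNReal.coe_pos, hq]; exact inv_pos.2 hR) hr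
  have h := (p.hasFPowerSeriesOnBall hpos).analyticOnNhd
  have he : p.sum = ps c := by
    ext s
    rw [ps, FormalMultilinearSeries.sum]
    refine tsum_congr fun n => ?_
    rw [FormalMultilinearSeries.ofScalars_apply_eq, smul_eq_mul]
  rw [he] at h
  refine h.mono ?_
  intro x hx
  rw [Metric.mem_eball, edist_zero_right]
  refine lt_of_lt_of_le ?_ hr
  rw [Metric.mem_ball, dist_zero_right, ← hq] at hx
  rw [← ofReal_norm, ENNReal.ofReal_lt_coe_iff (norm_nonneg _)]
  exact hx

theorem ps_hasSum {c : ℕ → ℝ} {R s : ℝ} (hR : 0 < R) (hc : ∀ n, |c n| ≤ R ^ n) (hs : |s| * R < 1) :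
    HasSum (fun n => c n * s ^ n) (ps c s) := by
  apply Summable.hasSum
  refine Summable.of_norm_bounded (summable_geometric_of_lt_one (r := |s| * R) (by positivity) hs) ?_
  intro n
  rw [norm_mul, norm_pow, Real.norm_eq_abs, Real.norm_eq_abs, mul_pow, mul_comm]
  have := hc n
  gcongr

theorem n_bound {c : ℕ → ℝ} {R : ℝ} (hR : 0 < R) (hc : ∀ n, |c n| ≤ R ^ n) (n : ℕ) :
    |(n : ℝ) * c n| ≤ (2 * R) ^ n := by
  rw [abs_mul, mul_pow, Nat.abs_cast]
  have h1 : (n : ℝ) ≤ 2 ^ n := by exact_mod_cast (Nat.lt_two_pow_self).le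
  have := hc n
  gcongr

theorem ps_deriv {c : ℕ → ℝ} {R s : ℝ} (hR : 0 < R) (hc : ∀ n, |c n| ≤ R ^ n)
    (hs : |s| * (4 * R) < 1) :
    ∃ D, HasDerivAt (ps c) D s ∧ s * D = ps (fun n => n * c n) s := by
  refine ⟨∑' n, c n * (n * s ^ (n - 1)), ?_, ?_⟩
  · refine hasDerivAt_tsum_of_isPreconnected (t := Metric.ball (0:ℝ) (4 * R)⁻¹)
      (u := fun n => (4 * R) * (1 / 2 : ℝ) ^ n) (y₀ := 0)
      (g := fun n s => c n * s ^ n) (g' := fun n s => c n * (n * s ^ (n - 1)))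
      (summable_geometric_two.mul_left _) Metric.isOpen_ball
      (convex_ball _ _).isPreconnected ?_ ?_ ?_ ?_ ?_
    · intro n y _
      exact (hasDerivAt_pow n y).const_mul (c n)
    · intro n y hy
      rw [Metric.mem_ball, dist_zero_right] at hy
      rcases n with _ | m
      · simp; positivity
      · have h := n_bound hR hc (m + 1)
        rw [abs_mul] at h
        rw [norm_mul, norm_mul, norm_pow, Real.norm_eq_abs, Real.norm_eq_abs]
        have h2 : ‖y‖ ^ m ≤ ((4 * R)⁻¹) ^ m := by gcongr
        calc |c (m+1)| * (|((m + 1 : ℕ) : ℝ)| * ‖y‖ ^ (m + 1 - 1))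
            = (|((m + 1 : ℕ) : ℝ)| * |c (m+1)|) * ‖y‖ ^ m := by simp; ring
          _ ≤ (2 * R) ^ (m + 1) * ((4 * R)⁻¹) ^ m := by gcongr
          _ = (4 * R) * (1 / 2) ^ (m + 1) := by
            rw [pow_succ, pow_succ, inv_pow]
            have : (4 * R) ^ m = 2 ^ m * (2 * R) ^ m := by rw [← mul_pow]; ring
            rw [this, one_div, inv_pow]
            field_simp
            ring
    · simp [hR]
    · refine (ps_hasSum (c := c) (s := 0) hR hc (by simp)).summable
    · rw [Metric.mem_ball, dist_zero_right, Real.norm_eq_abs, ← one_div, lt_div_iff₀ (by positivity)]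
      exact hs
  · rw [ps, ← tsum_mul_left]
    refine tsum_congr fun n => ?_
    rcases n with _ | m
    · simp
    · simp [pow_succ]; ring

theorem hsz {f : ℕ → ℝ} (h : ∀ n, f n = 0) : HasSum f 0 := by
  rw [show f = fun _ => 0 from funext h]
  exact hasSum_zero

def shiftc (a : ℕ → ℝ) : ℕ → ℝ
  | 0 => 0
  | n + 1 => a n

theorem hasSum_shift {a : ℕ → ℝ} {s A : ℝ} (h : HasSum (fun n => a n * s ^ n) A) :
    HasSum (fun n => shiftc a n * s ^ n) (s * A) := by
  have := (hasSum_nat_add_iff (f := fun n => shiftc a n * s ^ n) (g := s * A) 1).1 (by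
    have e : (fun n => shiftc a (n + 1) * s ^ (n + 1)) = fun n => s * (a n * s ^ n) := by
      funext n; simp only [shiftc]; ring
    rw [e]
    exact h.mul_left s)
  simpa [shiftc] using this

noncomputable def mkk (k : ℝ) (n : ℕ) : ℝ := (n:ℝ) ^ 2 + (2 * k - 1) * n + k * (k - 1)

noncomputable def fc (k c1 c2 : ℝ) : ℕ → ℝ
  | 0 => 1
  | 1 => (8 * mkk k 0 + c1) / (16 * k)
  | n + 2 => ((8 * mkk k (n+1) + c1) * fc k c1 c2 (n + 1) + (c2 - 2 * mkk k n) * fc k c1 c2 n) /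
      (8 * (n + 2) * (n + 1 + 2 * k))

theorem mk_bound (k : ℝ) (n : ℕ) :
    |mkk k n| ≤ (1 + |2 * k - 1| + |k * (k - 1)|) * ((n : ℝ) + 1) ^ 2 := by
  have hn : (0:ℝ) ≤ n := Nat.cast_nonneg n
  unfold mkk
  have h1 : |(n:ℝ) ^ 2 + (2 * k - 1) * n + k * (k - 1)| ≤ (n:ℝ)^2 + |2 * k - 1| * n + |k * (k-1)| := by
    refine (abs_add_three _ _ _).trans ?_
    rw [abs_mul (2 * k - 1), abs_of_nonneg hn, abs_of_nonneg (sq_nonneg (n:ℝ))]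
  have h2 : |2 * k - 1| * n ≤ |2 * k - 1| * (n + 1) ^ 2 := by gcongr; nlinarith
  have h3 : |k * (k-1)| * 1 ≤ |k * (k-1)| * ((n:ℝ) + 1) ^ 2 := by gcongr; nlinarith
  nlinarith

theorem fc_bound {k c1 c2 : ℝ} (hk : 3 / 4 ≤ k) :
    ∃ R, 0 < R ∧ ∀ n, |fc k c1 c2 n| ≤ R ^ n := by
  set B := 1 + |2 * k - 1| + |k * (k - 1)| with hB
  have hB1 : 1 ≤ B := by
    have := abs_nonneg (2 * k - 1); have := abs_nonneg (k * (k-1)); linarith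
  refine ⟨10 * B + |c1| + |c2|, by positivity, ?_⟩
  set R := 10 * B + |c1| + |c2| with hR
  have a1 := abs_nonneg c1
  have a2 := abs_nonneg c2
  have hR1 : 1 ≤ R := by linarith
  have key : ∀ n, |fc k c1 c2 n| ≤ R ^ n ∧ |fc k c1 c2 (n+1)| ≤ R ^ (n+1) := by
    intro n
    induction n with
    | zero =>
      constructor
      · simp [fc]
      · simp only [fc, zero_add, pow_one]
        rw [abs_div, abs_of_pos (by linarith : 0 < 16 * k), div_le_iff₀ (by linarith)]
        have h0 := mk_bound k 0
        have : |8 * mkk k 0 + c1| ≤ 8 * |mkk k 0| + |c1| := by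
          refine (abs_add_le _ _).trans ?_
          rw [abs_mul]; norm_num
        rw [← hB] at h0
        norm_num at h0
        nlinarith
    | succ n ih =>
      refine ⟨ih.2, ?_⟩
      have h0 := mk_bound k n
      have h1 := mk_bound k (n+1)
      rw [← hB] at h0 h1
      push_cast at h1
      have hn : (0:ℝ) ≤ n := Nat.cast_nonneg n
      have hden : 8 * ((n:ℝ) + 2) ^ 2 ≤ 8 * (n + 2) * (n + 1 + 2 * k) := by nlinarith
      have hden0 : 0 < 8 * ((n:ℝ) + 2) ^ 2 := by positivity
      rw [fc, abs_div, abs_of_pos (by linarith : 0 < 8 * ((n:ℝ) + 2) * (n + 1 + 2 * k)),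
        div_le_iff₀ (by linarith)]
      have t1 : |8 * mkk k (n+1) + c1| ≤ (8 * B + |c1|) * ((n:ℝ) + 2) ^ 2 := by
        refine (abs_add_le _ _).trans ?_
        rw [abs_mul, abs_of_pos (by norm_num : (0:ℝ) < 8)]
        have : |c1| * 1 ≤ |c1| * ((n:ℝ) + 2) ^ 2 := by gcongr; nlinarith
        nlinarith
      have t2 : |c2 - 2 * mkk k n| ≤ (|c2| + 2 * B) * ((n:ℝ) + 2) ^ 2 := by
        refine (abs_sub _ _).trans ?_
        rw [abs_mul, abs_of_pos (by norm_num : (0:ℝ) < 2)]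
        have : |c2| * 1 ≤ |c2| * ((n:ℝ) + 2) ^ 2 := by gcongr; nlinarith
        have : B * ((n:ℝ) + 1) ^ 2 ≤ B * ((n:ℝ) + 2) ^ 2 := by gcongr; linarith
        nlinarith
      have t3 : |fc k c1 c2 n| ≤ R ^ (n + 1) :=
        ih.1.trans (pow_le_pow_right₀ hR1 (Nat.le_succ n))
      calc _ ≤ |8 * mkk k (n+1) + c1| * |fc k c1 c2 (n+1)| + |c2 - 2 * mkk k n| * |fc k c1 c2 n| := by
            refine (abs_add_le _ _).trans ?_
            rw [abs_mul, abs_mul]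
        _ ≤ (8 * B + |c1|) * ((n:ℝ) + 2) ^ 2 * R ^ (n+1) + (|c2| + 2 * B) * ((n:ℝ) + 2) ^ 2 * R ^ (n+1) := by
            gcongr
            exact ih.2
        _ = R ^ (n + 1) * R * ((n:ℝ) + 2) ^ 2 := by rw [hR]; ring
        _ ≤ R ^ (n + 1) * R * (8 * ((n:ℝ) + 2) ^ 2) := by
            gcongr
            nlinarith
        _ ≤ R ^ (n + 1) * R * (8 * (n + 2) * (n + 1 + 2 * k)) := by
            gcongr
        _ = _ := by ring
  exact fun n => (key n).1

theorem fc_rec {k c1 c2 : ℝ} (hk : 3 / 4 ≤ k) (n : ℕ) :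
    8 * (mkk k n * fc k c1 c2 n) - 8 * shiftc (fun n => mkk k n * fc k c1 c2 n) n
      + 2 * shiftc (shiftc (fun n => mkk k n * fc k c1 c2 n)) n
      - (8 * k * (k - 1) * fc k c1 c2 n + c1 * shiftc (fc k c1 c2) n
        + c2 * shiftc (shiftc (fc k c1 c2)) n) = 0 := by
  match n with
  | 0 => simp [shiftc, fc, mkk]; ring
  | 1 =>
    simp only [shiftc, fc, mkk]
    have : k ≠ 0 := by linarith
    push_cast
    field_simp
    ring
  | n + 2 =>
    simp only [shiftc]
    rw [fc]
    have hn : (0:ℝ) ≤ n := Nat.cast_nonneg n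
    have h1 : ((n:ℝ) + 1 + 2 * k) ≠ 0 := by linarith
    have h2 : ((n:ℝ) + 2) ≠ 0 := by linarith
    have h3 : mkk k (n+2) = k * (k - 1) + (n + 2) * (n + 1 + 2 * k) := by
      unfold mkk; push_cast; ring
    rw [h3]
    field_simp
    ring

theorem riccati_analytic {τ c1 c2 : ℝ} (hτ : 3 ≤ τ) :
    ∃ (g g' : ℝ → ℝ) (r : ℝ), 0 < r ∧ AnalyticOnNhd ℝ g (Metric.ball 0 r) ∧ g 0 = τ ∧
      ∀ s ∈ Metric.ball (0:ℝ) r, HasDerivAt g (g' s) s ∧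
        s * (2 - s) * g' s + 2 * (s - 1) * g s + g s ^ 2 / 2
          = τ ^ 2 / 2 - 2 * τ + c1 * s + c2 * s ^ 2 := by
  set k := τ / 4 with hk
  have hk34 : 3 / 4 ≤ k := by linarith
  obtain ⟨R, hR, hc⟩ := fc_bound (c1 := c1) (c2 := c2) hk34
  set c := fc k c1 c2 with hcdef
  have hc1 := n_bound hR hc
  have hc2 := n_bound (by positivity : 0 < 2 * R) hc1
  have hA0 := ps_analytic hR hc
  have hA1 := ps_analytic (by positivity : 0 < 2 * R) hc1
  have hχ0 : ps c 0 = 1 := by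
    rw [ps, tsum_eq_single 0]
    · simp [hcdef, fc]
    · intro n hn; simp [hn]
  have hχ10 : ps (fun n => (n:ℝ) * c n) 0 = 0 := by
    rw [ps, tsum_eq_single 0]
    · simp
    · intro n hn; simp [hn]
  have hcont : ContinuousAt (ps c) 0 := (hA0 0 (by simp [hR])).continuousAt
  have hne : ∀ᶠ s in 𝓝 (0:ℝ), ps c s ≠ 0 := by
    refine hcont.eventually_ne ?_
    rw [hχ0]; norm_num
  obtain ⟨r0, hr0, hball⟩ := Metric.eventually_nhds_iff_ball.1 hne
  have hr : 0 < min r0 (8 * R)⁻¹ := lt_min hr0 (by positivity)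
  have hsub : ∀ s ∈ Metric.ball (0:ℝ) (min r0 (8 * R)⁻¹), ps c s ≠ 0 ∧ |s| * (8 * R) < 1 := by
    intro s hs
    rw [Metric.mem_ball, dist_zero_right, Real.norm_eq_abs, lt_min_iff] at hs
    refine ⟨hball s (by rw [Metric.mem_ball, dist_zero_right]; exact hs.1), ?_⟩
    have := hs.2
    rwa [← one_div, lt_div_iff₀ (by positivity)] at this
  have hsmall : ∀ s : ℝ, |s| * (8 * R) < 1 → |s| * R < 1 ∧ |s| * (2 * R) < 1 ∧ |s| * (4 * R) < 1 := by
    intro s hs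
    have : 0 ≤ |s| * R := by positivity
    refine ⟨?_, ?_, ?_⟩ <;> linarith
  have hinv : ∀ s q : ℝ, 0 < q → |s| * q < 1 → s ∈ Metric.ball (0:ℝ) q⁻¹ := by
    intro s q hq h
    rw [Metric.mem_ball, dist_zero_right, Real.norm_eq_abs, ← one_div, lt_div_iff₀ hq]
    exact h
  -- derivatives
  have hder0 : ∀ s ∈ Metric.ball (0:ℝ) (min r0 (8 * R)⁻¹), ∃ D, HasDerivAt (ps c) D s ∧
      s * D = ps (fun n => n * c n) s := fun s hs =>
    ps_deriv hR hc (hsmall s (hsub s hs).2).2.2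
  have hder1 : ∀ s ∈ Metric.ball (0:ℝ) (min r0 (8 * R)⁻¹), ∃ D,
      HasDerivAt (ps (fun n => (n:ℝ) * c n)) D s ∧
      s * D = ps (fun n => n * (n * c n)) s := fun s hs =>
    ps_deriv (by positivity) hc1 (by have := (hsub s hs).2; linarith)
  let g : ℝ → ℝ := fun s => 2 * (2 - s) * (k + ps (fun n => (n:ℝ) * c n) s / ps c s)
  have hgan : AnalyticOnNhd ℝ g (Metric.ball 0 (min r0 (8 * R)⁻¹)) := by
    intro s hs
    have h := hsub s hs
    have h' := hsmall s h.2
    have b0 := hA0 s (hinv s R hR h'.1)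
    have b1 := hA1 s (hinv s _ (by positivity) h'.2.1)
    exact (analyticAt_const.mul (analyticAt_const.sub analyticAt_id)).mul
      (analyticAt_const.add (b1.div b0 h.1))
  refine ⟨g, deriv g, min r0 (8 * R)⁻¹, hr, hgan, ?_, ?_⟩
  · simp only [g]; rw [hχ0, hχ10]; rw [hk]; ring
  intro s hs
  refine ⟨(hgan s hs).differentiableAt.hasDerivAt, ?_⟩
  obtain ⟨D0, hD0, e0⟩ := hder0 s hs
  obtain ⟨D1, hD1, e1⟩ := hder1 s hs
  have hn := (hsub s hs).1
  have h' := hsmall s (hsub s hs).2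
  have hgd : HasDerivAt g ((2 * (-1)) * (k + ps (fun n => (n:ℝ) * c n) s / ps c s) + 2 * (2 - s) *
      ((D1 * ps c s - ps (fun n => (n:ℝ) * c n) s * D0) / ps c s ^ 2)) s :=
    (((hasDerivAt_id s).const_sub 2).const_mul 2).mul ((hD1.div hD0 hn).const_add k)
  rw [hgd.deriv]
  -- series identity
  have S0 := ps_hasSum hR hc h'.1
  have S1 := ps_hasSum (by positivity) hc1 h'.2.1
  have S2 := ps_hasSum (s := s) (by positivity) hc2 (by linarith [h'.2.2])
  have SA : HasSum (fun n => (mkk k n * c n) * s ^ n)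
      (ps (fun n => (n:ℝ) * (n * c n)) s + (2 * k - 1) * ps (fun n => (n:ℝ) * c n) s
        + k * (k - 1) * ps c s) := by
    convert ((S2.add (S1.mul_left (2 * k - 1))).add (S0.mul_left (k * (k - 1)))) using 2 with n
    simp only [mkk]; ring
  have SB := hasSum_shift SA
  have SC := hasSum_shift SB
  have S0b := hasSum_shift S0
  have S0c := hasSum_shift S0b
  have tot := (((SA.mul_left 8).sub (SB.mul_left 8)).add (SC.mul_left 2)).sub
    (((S0.mul_left (8 * k * (k - 1))).add (S0b.mul_left c1)).add (S0c.mul_left c2))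
  have hz : ∀ n, _ = _ := fun n => fc_rec (c1 := c1) (c2 := c2) hk34 n
  have tot0 := tot.unique (hsz (by
    intro n
    have := hz n
    linear_combination (s ^ n) * this))
  rw [← e1, ← e0] at tot0
  rw [← e0]
  have hτk : τ = 4 * k := by rw [hk]; ring
  simp only [g]
  rw [← e0, hτk]
  generalize ps c s = χ at *
  field_simp
  linear_combination (2 * χ) * tot0


theorem const_of_deriv {G : ℝ → ℝ} {b : ℝ} (hb : 0 < b)
    (h : ∀ s ∈ Set.Ioc 0 b, HasDerivAt G 0 s) : ∀ s ∈ Set.Ioc 0 b, G s = G b := by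
  intro s hs
  have hbb : b ∈ Set.Ioc 0 b := ⟨hb, le_rfl⟩
  refine le_antisymm (mono_of_deriv (G' := fun _ => 0) h (fun _ _ => le_rfl) s hs b hbb hs.2) ?_
  have := mono_of_deriv (G := fun s => - G s) (G' := fun _ => -0) (fun s hs => (h s hs).neg)
    (fun _ _ => by simp) s hs b hbb hs.2
  linarith

theorem riccati_c0 {U f : ℝ → ℝ} {b τ c0 c1 c2 : ℝ} (hb : 0 < b) (hb1 : b ≤ 1)
    (h : ∀ s ∈ Set.Ioc 0 b, HasDerivAt U (f s) s)
    (hF : ∀ s ∈ Set.Ioc 0 b, s * (2 - s) * f s + 2 * (s - 1) * U s + U s ^ 2 / 2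
      = c0 + c1 * s + c2 * s ^ 2)
    (hτ : Tendsto U (𝓝[>] 0) (𝓝 τ)) : c0 = τ ^ 2 / 2 - 2 * τ := by
  have hlim : Tendsto (fun t => (c0 + c1 * t + c2 * t ^ 2 - (2 * (t - 1) * U t + U t ^ 2 / 2)) / (2 - t))
      (𝓝[>] 0) (𝓝 ((c0 + c1 * 0 + c2 * 0 ^ 2 - (2 * (0 - 1) * τ + τ ^ 2 / 2)) / (2 - 0))) := by
    have i : Tendsto (fun t : ℝ => t) (𝓝[>] 0) (𝓝 0) := tendsto_nhdsWithin_of_tendsto_nhds tendsto_id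
    exact ((((i.const_mul c1).const_add c0).add ((i.pow 2).const_mul c2)).sub
      ((((i.sub_const 1).const_mul 2).mul hτ).add ((hτ.pow 2).div_const 2))).div (i.const_sub 2) (by norm_num)
  have heq : ∀ s ∈ Set.Ioc 0 b,
      (c0 + c1 * s + c2 * s ^ 2 - (2 * (s - 1) * U s + U s ^ 2 / 2)) / (2 - s) = s * f s := by
    intro s hs
    have h2 : 0 < 2 - s := by linarith [hs.2]
    rw [← hF s hs]
    field_simp
    ring
  by_contra hne
  rcases lt_or_gt_of_ne hne with hlt | hgt
  · obtain ⟨b', hb', hb'b, hP⟩ := ev_Ioc (hlim.eventually (gt_mem_nhds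
      (show _ < -((τ ^ 2 / 2 - 2 * τ - c0) / 4) by linarith))) hb
    refine lemB (c := (τ ^ 2 / 2 - 2 * τ - c0) / 4) hb' (by linarith)
      (fun s hs => h s ⟨hs.1, by linarith [hs.2]⟩) ?_ hτ
    intro s hs
    rw [← heq s ⟨hs.1, by linarith [hs.2]⟩]
    exact (hP s hs).le
  · obtain ⟨b', hb', hb'b, hP⟩ := ev_Ioc (hlim.eventually (lt_mem_nhds
      (a := ((c0 - (τ ^ 2 / 2 - 2 * τ)) / 4)) (by linarith))) hb
    refine lemB (U := fun s => - U s) (f := fun s => - f s) (c := (c0 - (τ ^ 2 / 2 - 2 * τ)) / 4) hb' (by linarith)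
      (fun s hs => (h s ⟨hs.1, by linarith [hs.2]⟩).neg) ?_ hτ.neg
    intro s hs
    have := heq s ⟨hs.1, by linarith [hs.2]⟩
    have := hP s hs
    linarith

theorem riccati_final {U f : ℝ → ℝ} {b τ c0 c1 c2 : ℝ} (hb : 0 < b) (hb1 : b ≤ 1) (hτ3 : 3 ≤ τ)
    (h : ∀ s ∈ Set.Ioc 0 b, HasDerivAt U (f s) s)
    (hF : ∀ s ∈ Set.Ioc 0 b, s * (2 - s) * f s + 2 * (s - 1) * U s + U s ^ 2 / 2
      = c0 + c1 * s + c2 * s ^ 2)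
    (hτ : Tendsto U (𝓝[>] 0) (𝓝 τ)) :
    ∃ (g : ℝ → ℝ) (r b' : ℝ), 0 < r ∧ 0 < b' ∧ b' ≤ b ∧ AnalyticOnNhd ℝ g (Metric.ball 0 r) ∧
      ∀ s ∈ Set.Ioc 0 b', U s = g s := by
  have hc0 := riccati_c0 hb hb1 h hF hτ
  obtain ⟨g, g', r, hr, hg, hg0, hgd⟩ := riccati_analytic (τ := τ) (c1 := c1) (c2 := c2) hτ3
  have hgt : Tendsto g (𝓝[>] 0) (𝓝 τ) := by
    have := (hg 0 (by simpa using hr)).continuousAt.tendsto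
    rw [hg0] at this
    exact tendsto_nhdsWithin_of_tendsto_nhds this
  have e1 : ∀ᶠ s in 𝓝[>] (0:ℝ), 2 < U s ∧ 2 < g s ∧ s ∈ Metric.ball (0:ℝ) r :=
    (hτ.eventually (lt_mem_nhds (by linarith))).and
      ((hgt.eventually (lt_mem_nhds (by linarith))).and
        (mem_nhdsWithin_of_mem_nhds (Metric.ball_mem_nhds _ hr)))
  obtain ⟨b', hb', hb'b, hP⟩ := ev_Ioc e1 hb
  refine ⟨g, r, b', hr, hb', hb'b.le, hg, ?_⟩
  have k := mono_of_deriv (G := fun s => -(U s - g s) ^ 2)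
    (G' := fun s => (U s - g s) ^ 2 * (4 * (s - 1) + (U s + g s)) / (s * (2 - s))) (b := b')
    (fun s hs => by
      have hs' : s ∈ Set.Ioc 0 b := ⟨hs.1, by linarith [hs.2]⟩
      have p := hP s hs
      have q := hgd s p.2.2
      have := (((h s hs').sub q.1).pow 2).neg
      refine this.congr_deriv ?_
      have h1 := hs.1
      have h2 : 0 < 2 - s := by linarith [hs'.2]
      have e1 := hF s hs'
      have e2 := q.2
      rw [hc0] at e1
      simp
      rw [eq_div_iff (by positivity)]
      linear_combination (-2 * (U s - g s)) * (e1 - e2))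
    (fun s hs => by
      have p := hP s hs
      have h1 := hs.1
      have h2 : 0 < 2 - s := by linarith [hs.2]
      have : 0 ≤ 4 * (s - 1) + (U s + g s) := by linarith
      positivity)
  intro s hs
  have hlim : Tendsto (fun s => -(U s - g s) ^ 2) (𝓝[>] 0) (𝓝 (-(τ - τ) ^ 2)) :=
    ((hτ.sub hgt).pow 2).neg
  have : -(τ - τ) ^ 2 ≤ -(U s - g s) ^ 2 := by
    refine le_of_tendsto hlim ?_
    filter_upwards [Ioc_mem_nhdsGT hs.1] with t ht
    exact k t ⟨ht.1, by linarith [ht.2, hs.2]⟩ s hs ht.2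
  have : (U s - g s) ^ 2 = 0 := by
    have := sq_nonneg (U s - g s)
    simp at *
    nlinarith
  have := pow_eq_zero_iff (two_ne_zero) |>.1 this
  linarith

theorem ode_main {U f f1 f2 W W1 W2 : ℝ → ℝ} {b τ : ℝ} (hb : 0 < b) (hb1 : b ≤ 1) (hτ3 : 3 ≤ τ)
    (hU : ∀ s ∈ Set.Ioc 0 b, HasDerivAt U (f s) s)
    (hf : ∀ s ∈ Set.Ioc 0 b, HasDerivAt f (f1 s) s)
    (hf1 : ∀ s ∈ Set.Ioc 0 b, HasDerivAt f1 (f2 s) s)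
    (hW : ∀ s ∈ Set.Ioc 0 b, HasDerivAt W (W1 s) s)
    (hW1 : ∀ s ∈ Set.Ioc 0 b, HasDerivAt W1 (W2 s) s)
    (hode : ∀ s ∈ Set.Ioc 0 b, s * (2 - s) * W2 s + U s * W1 s = 0)
    (hF : ∀ s ∈ Set.Ioc 0 b, HasDerivAt
      (fun s => s * (2 - s) * f2 s + 2 * (1 - s) * f1 s + 2 * f s + f s ^ 2 + U s * f1 s)
      (-2 * W s * W1 s / (s * (2 - s))) s)
    (hτ : Tendsto U (𝓝[>] 0) (𝓝 τ)) :
    ∃ (c : ℝ) (g1 g2 : ℝ → ℝ) (r b' : ℝ), 0 < r ∧ 0 < b' ∧ b' ≤ b ∧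
      AnalyticOnNhd ℝ g1 (Metric.ball 0 r) ∧ AnalyticOnNhd ℝ g2 (Metric.ball 0 r) ∧
      ∀ s ∈ Set.Ioo 0 b', W s = c ∧ U s = g1 s ∧ f s = g2 s := by
  obtain ⟨b1, hb1', hb1b, hP⟩ := ev_Ioc (hτ.eventually (lt_mem_nhds (a := 2) (by linarith))) hb
  have sub : ∀ q ≤ b1, ∀ s ∈ Set.Ioc 0 q, s ∈ Set.Ioc 0 b := fun q hq s hs =>
    ⟨hs.1, by linarith [hs.2]⟩
  have hW1z : ∀ s ∈ Set.Ioc 0 b1, W1 s = 0 := by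
    intro q hq
    by_contra hne
    rcases lt_or_gt_of_ne hne with hlt | hgt
    · refine lemW (b := q) (W := fun s => - W s) (W1 := fun s => - W1 s) (W2 := fun s => - W2 s)
        hq.1 (by linarith [hq.2]) hτ3 (fun s hs => hU s (sub q hq.2 s hs))
        (fun s hs => hf s (sub q hq.2 s hs)) (fun s hs => hf1 s (sub q hq.2 s hs))
        (fun s hs => (hW s (sub q hq.2 s hs)).neg) (fun s hs => (hW1 s (sub q hq.2 s hs)).neg)
        (fun s hs => by have := hode s (sub q hq.2 s hs); linarith)
        (fun s hs => (hF s (sub q hq.2 s hs)).congr_deriv (by ring))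
        hτ (fun s hs => (hP s ⟨hs.1, by linarith [hs.2, hq.2]⟩).le) (by linarith)
    · exact lemW (b := q) (W := W) (W1 := W1) (W2 := W2)
        hq.1 (by linarith [hq.2]) hτ3 (fun s hs => hU s (sub q hq.2 s hs))
        (fun s hs => hf s (sub q hq.2 s hs)) (fun s hs => hf1 s (sub q hq.2 s hs))
        (fun s hs => (hW s (sub q hq.2 s hs))) (fun s hs => (hW1 s (sub q hq.2 s hs)))
        (fun s hs => hode s (sub q hq.2 s hs))
        (fun s hs => (hF s (sub q hq.2 s hs)))
        hτ (fun s hs => (hP s ⟨hs.1, by linarith [hs.2, hq.2]⟩).le) hgt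
  have hWc := const_of_deriv hb1' (fun s hs => (hW s (sub b1 le_rfl s hs)).congr_deriv (hW1z s hs))
  let F : ℝ → ℝ := fun s => s * (2 - s) * f s + 2 * (s - 1) * U s + U s ^ 2 / 2
  let F1 : ℝ → ℝ := fun s => s * (2 - s) * f1 s + 2 * U s + U s * f s
  have hFd : ∀ s ∈ Set.Ioc 0 b, HasDerivAt F (F1 s) s := by
    intro s hs
    have i := hasDerivAt_id s
    have := (((i.mul (i.const_sub 2)).mul (hf s hs)).add
      (((i.sub_const 1).const_mul 2).mul (hU s hs))).add (((hU s hs).pow 2).div_const 2)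
    refine this.congr_deriv ?_
    simp [F1]; ring
  have hFd2 : ∀ s ∈ Set.Ioc 0 b, HasDerivAt F1
      (s * (2 - s) * f2 s + 2 * (1 - s) * f1 s + 2 * f s + f s ^ 2 + U s * f1 s) s := by
    intro s hs
    have i := hasDerivAt_id s
    have := (((i.mul (i.const_sub 2)).mul (hf1 s hs)).add
      ((hU s hs).const_mul 2)).add ((hU s hs).mul (hf s hs))
    refine this.congr_deriv ?_
    simp; ring
  have k2 := const_of_deriv hb1' (fun s hs => (hF s (sub b1 le_rfl s hs)).congr_deriv
    (by rw [hW1z s hs]; simp))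
  generalize (b1 * (2 - b1) * f2 b1 + 2 * (1 - b1) * f1 b1 + 2 * f b1 + f b1 ^ 2 + U b1 * f1 b1) = C2 at k2
  have k1 := const_of_deriv (G := fun s => F1 s - C2 * s) hb1' (fun s hs => by
    refine ((hFd2 s (sub b1 le_rfl s hs)).sub ((hasDerivAt_id s).const_mul C2)).congr_deriv ?_
    rw [k2 s hs]; ring)
  generalize F1 b1 - C2 * b1 = C1 at k1
  have k0 := const_of_deriv (G := fun s => F s - (C2 / 2 * s ^ 2 + C1 * s)) hb1' (fun s hs => by
    refine ((hFd s (sub b1 le_rfl s hs)).sub (((hasDerivAt_pow 2 s).const_mul (C2 / 2)).add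
      ((hasDerivAt_id s).const_mul C1))).congr_deriv ?_
    have := k1 s hs
    simp
    linarith)
  generalize F b1 - (C2 / 2 * b1 ^ 2 + C1 * b1) = C0 at k0
  obtain ⟨g, r, b', hr, hb', hb'1, hg, hgU⟩ := riccati_final (c0 := C0) (c1 := C1) (c2 := C2 / 2)
    hb1' (by linarith) hτ3
    (fun s hs => hU s (sub b1 le_rfl s hs)) (fun s hs => by
      have := k0 s hs
      simp only [F] at this
      linarith) hτ
  refine ⟨W b1, g, deriv g, r, min b' r, hr, lt_min hb' hr, by linarith [min_le_left b' r], hg, hg.deriv, ?_⟩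
  intro s hs
  have h1 : s < b' := lt_of_lt_of_le hs.2 (min_le_left _ _)
  refine ⟨hWc s ⟨hs.1, by linarith⟩, hgU s ⟨hs.1, h1.le⟩, ?_⟩
  rw [← (hU s ⟨hs.1, by linarith⟩).deriv]
  refine Filter.EventuallyEq.deriv_eq ?_
  filter_upwards [Ioo_mem_nhds hs.1 h1] with t ht using hgU t ⟨ht.1, ht.2.le⟩


theorem e3_apply (j k : Fin 3) : e3 j k = if k = j then 1 else 0 := by
  simp [e3, Pi.single_apply]

/-- partial derivative with differentiability -/
def PD (j : Fin 3) (f : V3 → ℝ) (d : ℝ) (x : V3) : Prop :=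
  ∃ L : V3 →L[ℝ] ℝ, HasFDerivAt f L x ∧ L (e3 j) = d

theorem PD.eq {j : Fin 3} {f : V3 → ℝ} {d : ℝ} {x : V3} (h : PD j f d x) : pd j f x = d := by
  obtain ⟨L, hL, rfl⟩ := h
  rw [pd, hL.fderiv]

theorem PD.of_diff {j : Fin 3} {f : V3 → ℝ} {x : V3} (h : DifferentiableAt ℝ f x) :
    PD j f (pd j f x) x := ⟨_, h.hasFDerivAt, rfl⟩

theorem PD.congr {j : Fin 3} {f g : V3 → ℝ} {d : ℝ} {x : V3} (h : PD j f d x)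
    (hg : g =ᶠ[𝓝 x] f) : PD j g d x := by
  obtain ⟨L, hL, rfl⟩ := h
  exact ⟨L, hL.congr_of_eventuallyEq hg, rfl⟩

theorem PD.val {j : Fin 3} {f : V3 → ℝ} {d d' : ℝ} {x : V3} (h : PD j f d x) (e : d = d') :
    PD j f d' x := e ▸ h

theorem PD.add {j : Fin 3} {f g : V3 → ℝ} {a b : ℝ} {x : V3} (hf : PD j f a x) (hg : PD j g b x) :
    PD j (fun y => f y + g y) (a + b) x := by
  obtain ⟨L, hL, rfl⟩ := hf
  obtain ⟨M, hM, rfl⟩ := hg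
  exact ⟨_, hL.add hM, by simp⟩

theorem PD.sub {j : Fin 3} {f g : V3 → ℝ} {a b : ℝ} {x : V3} (hf : PD j f a x) (hg : PD j g b x) :
    PD j (fun y => f y - g y) (a - b) x := by
  obtain ⟨L, hL, rfl⟩ := hf
  obtain ⟨M, hM, rfl⟩ := hg
  exact ⟨_, hL.sub hM, by simp⟩

theorem PD.mul {j : Fin 3} {f g : V3 → ℝ} {a b : ℝ} {x : V3} (hf : PD j f a x) (hg : PD j g b x) :
    PD j (fun y => f y * g y) (a * g x + f x * b) x := by
  obtain ⟨L, hL, rfl⟩ := hf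
  obtain ⟨M, hM, rfl⟩ := hg
  exact ⟨_, hL.mul hM, by simp; ring⟩

theorem PD.comp {j : Fin 3} {f : V3 → ℝ} {g : ℝ → ℝ} {a b : ℝ} {x : V3} (hf : PD j f a x)
    (hg : HasDerivAt g b (f x)) : PD j (fun y => g (f y)) (b * a) x := by
  obtain ⟨L, hL, rfl⟩ := hf
  exact ⟨_, hg.comp_hasFDerivAt x hL, by simp⟩

theorem PD.const (j : Fin 3) (c : ℝ) (x : V3) : PD j (fun _ => c) 0 x :=
  ⟨0, hasFDerivAt_const c x, by simp⟩

theorem PD.coord (j k : Fin 3) (x : V3) : PD j (fun y => y k) (if k = j then 1 else 0) x :=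
  ⟨EuclideanSpace.proj k, (EuclideanSpace.proj k : V3 →L[ℝ] ℝ).hasFDerivAt, by
    simp [e3_apply]⟩

theorem normsq (x : V3) : ‖x‖ ^ 2 = x 0 ^ 2 + x 1 ^ 2 + x 2 ^ 2 := by
  rw [EuclideanSpace.norm_sq_eq]; simp [Fin.sum_univ_three]

/-- inverse norm -/
def Ri (x : V3) : ℝ := ‖x‖⁻¹

theorem Ri_eq (x : V3) : Ri x = (√(x 0 ^ 2 + x 1 ^ 2 + x 2 ^ 2))⁻¹ := by
  rw [Ri, ← normsq, Real.sqrt_sq (norm_nonneg _)]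

theorem PD.Ri (j : Fin 3) {x : V3} (hx : x ≠ 0) : PD j Ri (-(x j * Ri x ^ 3)) x := by
  have hq : PD j (fun y => y 0 * y 0 + y 1 * y 1 + y 2 * y 2) (2 * x j) x := by
    have := ((((PD.coord j 0 x).mul (PD.coord j 0 x)).add
      ((PD.coord j 1 x).mul (PD.coord j 1 x))).add ((PD.coord j 2 x).mul (PD.coord j 2 x)))
    convert this using 1
    fin_cases j <;> simp <;> ring
  have hn : 0 < ‖x‖ := norm_pos_iff.mpr hx
  have hs : x 0 * x 0 + x 1 * x 1 + x 2 * x 2 = ‖x‖ ^ 2 := by rw [normsq]; ring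
  have h1 := (Real.hasDerivAt_sqrt (x := x 0 * x 0 + x 1 * x 1 + x 2 * x 2)
    (by rw [hs]; positivity)).inv (by rw [hs]; positivity)
  have h2 := hq.comp h1
  rw [hs, Real.sqrt_sq hn.le] at h2
  have h3 := h2.congr (g := _root_.Ri) (Eventually.of_forall fun y => by
    rw [Ri_eq]; simp only [Pi.inv_apply]; congr 2; ring)
  convert h3 using 1
  rw [_root_.Ri]
  field_simp

/-- cosine of the polar angle plus one -/
def Sg (x : V3) : ℝ := 1 + x 2 * Ri x

def dl (j : Fin 3) : ℝ := if 2 = j then 1 else 0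

/-- gradient of `Sg` -/
def Yj (j : Fin 3) (x : V3) : ℝ := dl j * Ri x - x 2 * x j * (Ri x * Ri x * Ri x)

theorem PD.Sg (j : Fin 3) {x : V3} (hx : x ≠ 0) : PD j Sg (Yj j x) x := by
  have := (PD.const j 1 x).add ((PD.coord j 2 x).mul (PD.Ri j hx))
  exact PD.val (f := _root_.Sg) this (by rw [_root_.Yj, dl]; ring)

theorem PD.Yj (j : Fin 3) {x : V3} (hx : x ≠ 0) (hn : ‖x‖ = 1) :
    PD j (Yj j) (dl j * (- x j) - (dl j * x j + x 2 - 3 * x 2 * x j * x j)) x := by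
  have hR : _root_.Ri x = 1 := by simp [_root_.Ri, hn]
  have hr := PD.Ri j hx
  have := ((PD.const j (dl j) x).mul hr).sub (((PD.coord j 2 x).mul (PD.coord j j x)).mul
    ((hr.mul hr).mul hr))
  exact PD.val (f := _root_.Yj j) this (by simp only [hR, if_true, dl]; ring)

theorem lap_comp {g g1 g2 : ℝ → ℝ} {x : V3} (hx : x ≠ 0) (hn : ‖x‖ = 1)
    (hg : ∀ᶠ s in 𝓝 (1 + x 2), HasDerivAt g (g1 s) s)
    (hg1 : HasDerivAt g1 (g2 (1 + x 2)) (1 + x 2)) :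
    lap3 (fun y => g (Sg y)) x
      = (1 - x 2 ^ 2) * g2 (1 + x 2) - 2 * x 2 * g1 (1 + x 2) := by
  have hR : Ri x = 1 := by simp [Ri, hn]
  have hS : Sg x = 1 + x 2 := by simp [Sg, hR]
  have hc : ContinuousAt Sg x := by
    obtain ⟨L, hL, -⟩ := PD.Sg 0 hx
    exact hL.continuousAt
  have h0 : ∀ᶠ y in 𝓝 x, y ≠ 0 := isOpen_ne.mem_nhds hx
  have hev : ∀ᶠ y in 𝓝 x, HasDerivAt g (g1 (Sg y)) (Sg y) :=
    hc.eventually (by rw [hS]; exact hg)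
  have key : ∀ j, pd j (fun y => pd j (fun y => g (Sg y)) y) x
      = g2 (1 + x 2) * (Yj j x) ^ 2
        + g1 (1 + x 2) * (dl j * (- x j) - (dl j * x j + x 2 - 3 * x 2 * x j * x j)) := by
    intro j
    have h1 : PD j (fun y => g1 (Sg y) * Yj j y) _ x :=
      ((PD.Sg j hx).comp (by rw [hS]; exact hg1)).mul (PD.Yj j hx hn)
    rw [(h1.congr (g := fun y => pd j (fun y => g (Sg y)) y) (by
      filter_upwards [h0, hev] with y hy hy2
      exact ((PD.Sg j hy).comp hy2).eq)).eq, hS]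
    ring
  have hsq : x 0 ^ 2 + x 1 ^ 2 + x 2 ^ 2 = 1 := by rw [← normsq, hn]; norm_num
  rw [lap3, Fin.sum_univ_three, key, key, key]
  simp only [Yj, dl, hR]
  simp
  linear_combination (g2 (1 + x 2) * x 2 ^ 2 + 3 * g1 (1 + x 2) * x 2) * hsq

theorem lap_comp_div {g g1 g2 : ℝ → ℝ} {x : V3} (hx : x ≠ 0) (hn : ‖x‖ = 1)
    (hg : ∀ᶠ s in 𝓝 (1 + x 2), HasDerivAt g (g1 s) s)
    (hg1 : HasDerivAt g1 (g2 (1 + x 2)) (1 + x 2)) :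
    lap3 (fun y => g (Sg y) * Ri y) x
      = (1 - x 2 ^ 2) * g2 (1 + x 2) - 2 * x 2 * g1 (1 + x 2) := by
  have hR : Ri x = 1 := by simp [Ri, hn]
  have hS : Sg x = 1 + x 2 := by simp [Sg, hR]
  have hc : ContinuousAt Sg x := by
    obtain ⟨L, hL, -⟩ := PD.Sg 0 hx
    exact hL.continuousAt
  have h0 : ∀ᶠ y in 𝓝 x, y ≠ 0 := isOpen_ne.mem_nhds hx
  have hev : ∀ᶠ y in 𝓝 x, HasDerivAt g (g1 (Sg y)) (Sg y) :=
    hc.eventually (by rw [hS]; exact hg)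
  have hgx : HasDerivAt g (g1 (Sg x)) (Sg x) := hev.self_of_nhds
  have key : ∀ j, pd j (fun y => pd j (fun y => g (Sg y) * Ri y) y) x
      = g2 (1 + x 2) * (Yj j x) ^ 2
        + g1 (1 + x 2) * (dl j * (- x j) - (dl j * x j + x 2 - 3 * x 2 * x j * x j))
        - 2 * g1 (1 + x 2) * Yj j x * x j + g (1 + x 2) * (3 * x j ^ 2 - 1) := by
    intro j
    have hr := PD.Ri j hx
    have h1 : PD j (fun y => g1 (Sg y) * Yj j y * Ri y
        - g (Sg y) * (y j * (Ri y * Ri y * Ri y))) _ x :=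
      ((((PD.Sg j hx).comp (by rw [hS]; exact hg1)).mul (PD.Yj j hx hn)).mul hr).sub
      (((PD.Sg j hx).comp hgx).mul ((PD.coord j j x).mul ((hr.mul hr).mul hr)))
    rw [(h1.congr (g := fun y => pd j (fun y => g (Sg y) * Ri y) y) (by
      filter_upwards [h0, hev] with y hy hy2
      rw [(((PD.Sg j hy).comp hy2).mul (PD.Ri j hy)).eq]
      ring)).eq, hS, hR]
    simp only [if_true]
    ring
  have hsq : x 0 ^ 2 + x 1 ^ 2 + x 2 ^ 2 = 1 := by rw [← normsq, hn]; norm_num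
  rw [lap3, Fin.sum_univ_three, key, key, key]
  simp only [Yj, dl, hR]
  simp
  linear_combination (g2 (1 + x 2) * x 2 ^ 2 + 3 * g1 (1 + x 2) * x 2 +
    2 * g1 (1 + x 2) * x 2 + 3 * g (1 + x 2)) * hsq

/-- gradient of a function of `Sg` at a unit point -/
theorem pd_comp {g : ℝ → ℝ} {d : ℝ} {x : V3} (j : Fin 3) (hx : x ≠ 0) (hn : ‖x‖ = 1)
    (hg : HasDerivAt g d (1 + x 2)) :
    PD j (fun y => g (Sg y)) (d * (dl j - x 2 * x j)) x := by
  have hR : Ri x = 1 := by simp [Ri, hn]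
  have hS : Sg x = 1 + x 2 := by simp [Sg, hR]
  have := (PD.Sg j hx).comp (by rw [hS]; exact hg)
  convert this using 1
  rw [Yj, hR]; ring

theorem pd_ri {x : V3} (j : Fin 3) (hx : x ≠ 0) (hn : ‖x‖ = 1) :
    PD j Ri (- x j) x := by
  have hR : Ri x = 1 := by simp [Ri, hn]
  have := PD.Ri j hx
  rw [hR] at this
  simpa using this

theorem diff_pd {g : V3 → ℝ} {x : V3} (j : Fin 3) (hg : ContDiffAt ℝ 2 g x) :
    DifferentiableAt ℝ (fun y => pd j g y) x := by
  have h := (hg.fderiv_right (m := 1) (by norm_num)).differentiableAt (by norm_num)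
  exact h.clm_apply (differentiableAt_const _)


theorem ev_cd {g : V3 → ℝ} {x : V3} (hg : ContDiffAt ℝ 2 g x) :
    ∀ᶠ y in 𝓝 x, DifferentiableAt ℝ g y :=
  (hg.eventually (by norm_num)).mono fun _ h => h.differentiableAt (by norm_num)

theorem cd_coord (i : Fin 3) (x : V3) : ContDiffAt ℝ 2 (fun z : V3 => z i) x :=
  (EuclideanSpace.proj i : V3 →L[ℝ] ℝ).contDiff.contDiffAt

theorem lap_mul_coord {g : V3 → ℝ} {x : V3} (i : Fin 3) (hg : ContDiffAt ℝ 2 g x) :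
    lap3 (fun z => g z * z i) x = lap3 g x * x i + 2 * pd i g x := by
  have key : ∀ j, pd j (fun y => pd j (fun z => g z * z i) y) x
      = pd j (fun y => pd j g y) x * x i + 2 * pd j g x * (if i = j then 1 else 0) := by
    intro j
    have hgx := hg.differentiableAt (by norm_num : (2 : WithTop ℕ∞) ≠ 0)
    have h1 := ((PD.of_diff (j := j) (diff_pd j hg)).mul (PD.coord j i x)).add
      ((PD.of_diff (j := j) hgx).mul (PD.const j (if i = j then 1 else 0) x))
    rw [(h1.congr (g := fun y => pd j (fun z => g z * z i) y) (by
      filter_upwards [ev_cd hg] with y hy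
      rw [((PD.of_diff (j := j) hy).mul (PD.coord j i y)).eq])).eq]
    ring
  simp only [lap3, Fin.sum_univ_three, key]
  fin_cases i <;> simp <;> ring

theorem lap_add {f g : V3 → ℝ} {x : V3} (hf : ContDiffAt ℝ 2 f x) (hg : ContDiffAt ℝ 2 g x) :
    lap3 (fun z => f z + g z) x = lap3 f x + lap3 g x := by
  have key : ∀ j, pd j (fun y => pd j (fun z => f z + g z) y) x
      = pd j (fun y => pd j f y) x + pd j (fun y => pd j g y) x := by
    intro j
    have h1 := (PD.of_diff (j := j) (diff_pd j hf)).add (PD.of_diff (j := j) (diff_pd j hg))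
    rw [(h1.congr (g := fun y => pd j (fun z => f z + g z) y) (by
      filter_upwards [ev_cd hf, ev_cd hg] with y hy hy2
      rw [((PD.of_diff (j := j) hy).add (PD.of_diff (j := j) hy2)).eq])).eq]
  simp only [lap3, Fin.sum_univ_three, key]
  ring

theorem lap_sub {f g : V3 → ℝ} {x : V3} (hf : ContDiffAt ℝ 2 f x) (hg : ContDiffAt ℝ 2 g x) :
    lap3 (fun z => f z - g z) x = lap3 f x - lap3 g x := by
  have key : ∀ j, pd j (fun y => pd j (fun z => f z - g z) y) x
      = pd j (fun y => pd j f y) x - pd j (fun y => pd j g y) x := by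
    intro j
    have h1 := (PD.of_diff (j := j) (diff_pd j hf)).sub (PD.of_diff (j := j) (diff_pd j hg))
    rw [(h1.congr (g := fun y => pd j (fun z => f z - g z) y) (by
      filter_upwards [ev_cd hf, ev_cd hg] with y hy hy2
      rw [((PD.of_diff (j := j) hy).sub (PD.of_diff (j := j) hy2)).eq])).eq]
  simp only [lap3, Fin.sum_univ_three, key]
  ring

theorem pd_congr {f g : V3 → ℝ} {x : V3} (j : Fin 3) (h : f =ᶠ[𝓝 x] g) : pd j f x = pd j g x := by
  rw [pd, pd, h.fderiv_eq]

theorem lap_congr {f g : V3 → ℝ} {x : V3} (h : f =ᶠ[𝓝 x] g) : lap3 f x = lap3 g x := by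
  unfold lap3
  refine Finset.sum_congr rfl fun j _ => pd_congr j ?_
  filter_upwards [h.eventuallyEq_nhds] with y hy
  exact pd_congr j hy

/-- the six scalar data at a unit point -/
theorem core_point {u : V3 → V3} {p : V3 → ℝ} {f f1 f2 h h1 h2 W W1 W2 : ℝ → ℝ} {x : V3}
    (hn : ‖x‖ = 1) (hq : 0 < x 0 ^ 2 + x 1 ^ 2)
    (hu : ∀ i, ContDiffAt ℝ 2 (fun z => u z i) x) (hp : DifferentiableAt ℝ p x)
    (hNS : NSEq u p x)
    (hf : ∀ᶠ s in 𝓝 (1 + x 2), HasDerivAt f (f1 s) s)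
    (hf1 : HasDerivAt f1 (f2 (1 + x 2)) (1 + x 2))
    (hh : ∀ᶠ s in 𝓝 (1 + x 2), HasDerivAt h (h1 s) s)
    (hh1 : HasDerivAt h1 (h2 (1 + x 2)) (1 + x 2))
    (hW : ∀ᶠ s in 𝓝 (1 + x 2), HasDerivAt W (W1 s) s)
    (hW1 : HasDerivAt W1 (W2 (1 + x 2)) (1 + x 2))
    (ef : ∀ᶠ z in 𝓝 x, u z 0 * z 0 + u z 1 * z 1 + u z 2 * z 2 = f (Sg z))
    (eh : ∀ᶠ z in 𝓝 x, u z 2 = h (Sg z) * Ri z)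
    (eW : ∀ᶠ z in 𝓝 x, u z 1 * z 0 - u z 0 * z 1 = W (Sg z)) :
    h1 (1 + x 2) = x 2 * f1 (1 + x 2) ∧
    (-((1 - x 2 ^ 2) * f2 (1 + x 2) - 2 * x 2 * f1 (1 + x 2))
      + f1 (1 + x 2) * (h (1 + x 2) - x 2 * f (1 + x 2))
      - (u x 0 ^ 2 + u x 1 ^ 2 + u x 2 ^ 2)
      + (pd 0 p x * x 0 + pd 1 p x * x 1 + pd 2 p x * x 2) = 0) ∧
    (-((1 - x 2 ^ 2) * h2 (1 + x 2) - 2 * x 2 * h1 (1 + x 2))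
      + h1 (1 + x 2) * (h (1 + x 2) - x 2 * f (1 + x 2)) - h (1 + x 2) * f (1 + x 2)
      + pd 2 p x = 0) ∧
    (-((1 - x 2 ^ 2) * W2 (1 + x 2))
      + W1 (1 + x 2) * (h (1 + x 2) - x 2 * f (1 + x 2))
      + (pd 1 p x * x 0 - pd 0 p x * x 1) = 0) ∧
    (u x 0 * x 0 + u x 1 * x 1 + u x 2 * x 2 = f (1 + x 2)) ∧
    (u x 2 = h (1 + x 2)) ∧ (u x 1 * x 0 - u x 0 * x 1 = W (1 + x 2)) := by
  have hx : x ≠ 0 := by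
    rintro rfl; simp at hn
  have hR : Ri x = 1 := by simp [Ri, hn]
  have hS : Sg x = 1 + x 2 := by simp [Sg, hR]
  have hsq : x 0 ^ 2 + x 1 ^ 2 + x 2 ^ 2 = 1 := by rw [← normsq, hn]; norm_num
  have ef0 := ef.self_of_nhds
  have eh0 := eh.self_of_nhds
  have eW0 := eW.self_of_nhds
  rw [hS] at ef0 eh0 eW0
  rw [hR, mul_one] at eh0
  have lf := lap_comp hx hn hf hf1
  have lh := lap_comp_div hx hn hh hh1
  have lW := lap_comp hx hn hW hW1
  rw [← lap_congr ef] at lf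
  rw [← lap_congr eh] at lh
  rw [← lap_congr eW] at lW
  have cdm : ∀ i k, ContDiffAt ℝ 2 (fun z => u z i * z k) x := fun i k =>
    (hu i).mul (cd_coord k x)
  rw [lap_add ((cdm 0 0).add (cdm 1 1)) (cdm 2 2), lap_add (cdm 0 0) (cdm 1 1),
    lap_mul_coord 0 (hu 0), lap_mul_coord 1 (hu 1), lap_mul_coord 2 (hu 2)] at lf
  rw [lap_sub (cdm 1 0) (cdm 0 1), lap_mul_coord 0 (hu 1), lap_mul_coord 1 (hu 0)] at lW
  have D : ∀ i j, PD j (fun z => u z i) (pd j (fun z => u z i) x) x := fun i j =>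
    PD.of_diff ((hu i).differentiableAt (by norm_num))
  have hf0 := hf.self_of_nhds
  have hh0 := hh.self_of_nhds
  have hW0 := hW.self_of_nhds
  have gf : ∀ j, _ := fun j => ((((D 0 j).mul (PD.coord j 0 x)).add
    ((D 1 j).mul (PD.coord j 1 x))).add ((D 2 j).mul (PD.coord j 2 x))).eq.symm.trans
    ((pd_comp j hx hn hf0).congr ef).eq
  have gh : ∀ j, _ := fun j =>
    (((pd_comp j hx hn hh0).mul (pd_ri j hx hn)).congr eh).eq
  have gW : ∀ j, _ := fun j => (((D 1 j).mul (PD.coord j 0 x)).sub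
    ((D 0 j).mul (PD.coord j 1 x))).eq.symm.trans
    ((pd_comp j hx hn hW0).congr eW).eq
  rw [hS, hR] at gh
  have gf0 := gf 0
  have gf1 := gf 1
  have gf2 := gf 2
  have gh0 := gh 0
  have gh1 := gh 1
  have gh2 := gh 2
  have gW0 := gW 0
  have gW1 := gW 1
  have gW2 := gW 2
  clear gf gh gW
  obtain ⟨hm, hd⟩ := hNS
  have m0 := hm 0
  have m1 := hm 1
  have m2 := hm 2
  simp only [Fin.sum_univ_three] at m0 m1 m2 hd
  simp [dl] at gf0 gf1 gf2 gh0 gh1 gh2 gW0 gW1 gW2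
  have hq0 := hq.ne'
  have hdiv : h1 (1 + x 2) = x 2 * f1 (1 + x 2) := by
    refine mul_left_cancel₀ hq0 ?_
    linear_combination (-(x 0)) * gf0 + x 1 * gW0 - x 1 * gf1 - x 0 * gW1
      + x 2 * (x 0 * gh0 + x 1 * gh1) + (x 0 ^ 2 + x 1 ^ 2) * (hd - gh2)
  have hcurl : pd 0 (fun z => u z 1) x - pd 1 (fun z => u z 0) x = - (W1 (1 + x 2) * x 2) := by
    refine mul_left_cancel₀ hq0 ?_
    linear_combination x 1 * gf0 + x 0 * gW0 - x 0 * gf1 + x 1 * gW1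
      - x 2 * (x 1 * gh0 - x 0 * gh1)
  refine ⟨hdiv, ?_, ?_, ?_, ef0, eh0, eW0⟩
  · linear_combination x 0 * m0 + x 1 * m1 + x 2 * m2 + lf - 2 * hd
      - (u x 0 * gf0 + u x 1 * gf1 + u x 2 * gf2) - f1 (1 + x 2) * eh0
      + f1 (1 + x 2) * x 2 * ef0
  · linear_combination m2 + lh - (u x 0 * gh0 + u x 1 * gh1 + u x 2 * gh2)
      - h1 (1 + x 2) * eh0 + (h1 (1 + x 2) * x 2 + h (1 + x 2)) * ef0
  · linear_combination x 0 * m1 - x 1 * m0 + lW - 2 * hcurl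
      - (u x 0 * gW0 + u x 1 * gW1 + u x 2 * gW2) - W1 (1 + x 2) * eh0
      + W1 (1 + x 2) * x 2 * ef0


/-- base point on the meridian -/
def Xs (s : ℝ) : V3 := !₂[√(s * (2 - s)), 0, s - 1]

theorem Xs0 (s : ℝ) : Xs s 0 = √(s * (2 - s)) := by simp [Xs]
theorem Xs1 (s : ℝ) : Xs s 1 = 0 := by simp [Xs]
theorem Xs2 (s : ℝ) : Xs s 2 = s - 1 := by simp [Xs]

/-- open cone near the south pole -/
def Dc (ε : ℝ) : Set V3 := {x | 0 < x 0 ^ 2 + x 1 ^ 2 ∧ x 2 < (ε - 1) * ‖x‖}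

theorem Dc_open (ε : ℝ) : IsOpen (Dc ε) := by
  have c : ∀ i : Fin 3, Continuous (fun x : V3 => x i) := fun i =>
    (EuclideanSpace.proj i : V3 →L[ℝ] ℝ).continuous
  exact (isOpen_lt continuous_const (((c 0).pow 2).add ((c 1).pow 2))).inter
    (isOpen_lt (c 2) (continuous_const.mul continuous_norm))

theorem Dc_ne {ε : ℝ} {x : V3} (hx : x ∈ Dc ε) : x ≠ 0 := by
  rintro rfl
  have := hx.1
  simp at this

theorem Xs_norm {s : ℝ} (h0 : 0 ≤ s) (h2 : s ≤ 2) : ‖Xs s‖ = 1 := by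
  have : ‖Xs s‖ ^ 2 = 1 := by
    rw [normsq, Xs0, Xs1, Xs2, Real.sq_sqrt (mul_nonneg h0 (by linarith))]; ring
  nlinarith [norm_nonneg (Xs s)]

theorem Xs_mem {ε s : ℝ} (hε : ε ≤ 1) (hs : s ∈ Set.Ioo 0 ε) : Xs s ∈ Dc ε := by
  have h2 : 0 < s * (2 - s) := mul_pos hs.1 (by linarith [hs.2])
  refine ⟨?_, ?_⟩
  · rw [Xs0, Xs1, Real.sq_sqrt h2.le]; simpa using h2
  · rw [Xs_norm hs.1.le (by linarith [hs.2]), Xs2]; linarith [hs.2]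

theorem Sg_mem {ε : ℝ} {x : V3} (hx : x ∈ Dc ε) : Sg x ∈ Set.Ioo 0 ε := by
  have hn : 0 < ‖x‖ := norm_pos_iff.mpr (Dc_ne hx)
  have hq := hx.1
  have h2 := hx.2
  have hs := normsq x
  have hlt : - ‖x‖ < x 2 := by
    have : |x 2| < ‖x‖ := abs_lt_of_sq_lt_sq (by linarith) hn.le
    exact (abs_lt.mp this).1
  rw [Sg, Ri, ← div_eq_mul_inv]
  constructor
  · have : -1 < x 2 / ‖x‖ := by rw [lt_div_iff₀ hn]; linarith
    linarith
  · have : x 2 / ‖x‖ < ε - 1 := by rw [div_lt_iff₀ hn]; linarith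
    linarith

theorem normS {x : V3} (hn : ‖x‖ = 1) : ‖x - S3‖ ^ 2 = 2 + 2 * x 2 := by
  have h := normsq x
  rw [hn] at h
  rw [normsq]
  simp [S3]
  linarith

theorem unit_mem {ε : ℝ} {x : V3} (hx : x ∈ Dc ε) : Ri x • x ∈ Dc ε ∧ ‖Ri x • x‖ = 1 ∧
    (Ri x • x) 2 = Sg x - 1 := by
  have hn : 0 < ‖x‖ := norm_pos_iff.mpr (Dc_ne hx)
  have hR : 0 < Ri x := inv_pos.mpr hn
  have h1 : ‖Ri x • x‖ = 1 := by
    rw [norm_smul, Ri, norm_inv, norm_norm, inv_mul_cancel₀ hn.ne']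
  have h2 : (Ri x • x) 2 = Sg x - 1 := by simp [Sg]; ring
  refine ⟨⟨?_, ?_⟩, h1, h2⟩
  · have := mul_pos (pow_pos hR 2) hx.1
    simp only [PiLp.smul_apply, smul_eq_mul]
    linarith
  · rw [h1, h2]; linarith [(Sg_mem hx).2]

theorem Dc_sub {ε δ : ℝ} (hδ : 0 < δ) (hε : 2 * ε ≤ δ ^ 2) : Dc ε ⊆ cone3 (NSCap δ) := by
  intro x hx
  obtain ⟨hm, hn, h2⟩ := unit_mem hx
  have hS := Sg_mem hx
  have hd := normS hn
  refine ⟨Dc_ne hx, ⟨?_, ?_⟩, ?_⟩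
  · rw [sphere2, mem_sphere_zero_iff_norm]; exact hn
  · rw [mem_ball, dist_eq_norm]
    change ‖Ri x • x - S3‖ < δ
    refine lt_of_pow_lt_pow_left₀ 2 hδ.le ?_
    rw [hd, h2]; linarith [hS.2]
  · intro h
    have h' : Ri x • x = S3 := h
    rw [h', sub_self] at hd
    rw [h'] at h2
    have : S3 2 = -1 := by simp [S3]
    linarith [hS.1]

theorem cd_Xs {s : ℝ} (h : 0 < s * (2 - s)) : ContDiffAt ℝ 2 Xs s := by
  rw [contDiffAt_euclidean]
  intro i
  fin_cases i
  · have : ContDiffAt ℝ 2 (fun s : ℝ => √(s * (2 - s))) s :=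
      (contDiffAt_id.mul (contDiffAt_const.sub contDiffAt_id)).sqrt h.ne'
    simpa [Xs] using this
  · simpa [Xs] using (contDiffAt_const : ContDiffAt ℝ 2 (fun _ : ℝ => (0:ℝ)) s)
  · have : ContDiffAt ℝ 2 (fun s : ℝ => s - 1) s := contDiffAt_id.sub contDiffAt_const
    simpa [Xs] using this

theorem two_derivs {g : ℝ → ℝ} {s : ℝ} (h : ContDiffAt ℝ 2 g s) :
    HasDerivAt g (deriv g s) s ∧ HasDerivAt (deriv g) (deriv (deriv g) s) s := by
  refine ⟨(h.differentiableAt (by norm_num)).hasDerivAt, ?_⟩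
  have h1 := (h.fderiv_right (m := 1) (by norm_num)).differentiableAt (by norm_num)
  have h2 : DifferentiableAt ℝ (fun t => fderiv ℝ g t 1) s := h1.clm_apply (differentiableAt_const _)
  have h3 : (fun t => fderiv ℝ g t 1) = deriv g := by ext t; simp
  rw [h3] at h2
  exact h2.hasDerivAt

theorem unit_comp {u : V3 → V3} {x : V3} (hn : ‖x‖ = 1) (hq : 0 < x 0 ^ 2 + x 1 ^ 2) :
    uRc u x = u x 0 * x 0 + u x 1 * x 1 + u x 2 * x 2 ∧
    rho x * uTc u x = x 2 * (u x 0 * x 0 + u x 1 * x 1 + u x 2 * x 2) - u x 2 ∧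
    rho x * uPc u x = u x 1 * x 0 - u x 0 * x 1 := by
  have hr : 0 < rho x := Real.sqrt_pos.mpr hq
  have hr2 : rho x ^ 2 = x 0 ^ 2 + x 1 ^ 2 := Real.sq_sqrt hq.le
  have h := normsq x
  rw [hn] at h
  refine ⟨by simp [uRc, hn], ?_, ?_⟩
  · rw [uTc, hn]
    field_simp
    rw [hr2]
    linear_combination u x 2 * h
  · rw [uPc]; field_simp; ring

theorem rho_eq {x y : V3} (hx : ‖x‖ = 1) (hy : ‖y‖ = 1) (h : x 2 = y 2) : rho x = rho y := by
  have a := normsq x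
  have b := normsq y
  rw [hx] at a
  rw [hy] at b
  rw [rho, rho]
  congr 1
  rw [h] at a
  linarith

theorem euler_p {p : V3 → ℝ} {x : V3} (hp : DifferentiableAt ℝ p x)
    (hh : ∀ lam : ℝ, 0 < lam → p (lam • x) = (lam ^ 2)⁻¹ * p x) :
    pd 0 p x * x 0 + pd 1 p x * x 1 + pd 2 p x * x 2 = -2 * p x := by
  have h1 : HasDerivAt (fun t : ℝ => p (t • x)) (fderiv ℝ p x x) 1 := by
    have hc : HasDerivAt (fun t : ℝ => t • x) ((1:ℝ) • x) 1 := (hasDerivAt_id (1:ℝ)).smul_const x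
    rw [one_smul] at hc
    have hp' : HasFDerivAt p (fderiv ℝ p x) ((fun t : ℝ => t • x) 1) := by
      simpa using hp.hasFDerivAt
    exact hp'.comp_hasDerivAt (1:ℝ) hc
  have h2 : HasDerivAt (fun t : ℝ => (t ^ 2)⁻¹ * p x) (-2 * p x) 1 := by
    have := (((hasDerivAt_id (1:ℝ)).pow 2).inv (by simp)).mul_const (p x)
    exact this.congr_deriv (by norm_num)
  have h3 := h1.unique (h2.congr_of_eventuallyEq (by
    filter_upwards [lt_mem_nhds (show (0:ℝ) < 1 by norm_num)] with t ht
    exact hh t ht))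
  rw [← h3]
  have hx : x = x 0 • e3 0 + x 1 • e3 1 + x 2 • e3 2 := by
    ext i; fin_cases i <;> simp [e3_apply]
  have hL : ∀ L : V3 →L[ℝ] ℝ, L x = x 0 * L (e3 0) + x 1 * L (e3 1) + x 2 * L (e3 2) := by
    intro L
    conv_lhs => rw [hx]
    simp only [map_add, map_smul, smul_eq_mul]
  rw [hL, pd, pd, pd]
  ring


theorem reduction {ε : ℝ} (hε : ε ≤ 1) {C : Set V3} (hC : Dc ε ⊆ C)
    {u : V3 → V3} {p : V3 → ℝ}
    (hu_hom : ∀ x ∈ C, ∀ lam : ℝ, 0 < lam → u (lam • x) = lam⁻¹ • u x)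
    (hp_hom : ∀ x ∈ C, ∀ lam : ℝ, 0 < lam → p (lam • x) = (lam ^ 2)⁻¹ * p x)
    (hu_reg : ContDiffOn ℝ 2 u C) (hp_reg : ContDiffOn ℝ 1 p C)
    (haxi : AxisymOn u C) (hNS : ∀ x ∈ C, NSEq u p x) :
    ∃ U f f1 f2 W W1 W2 : ℝ → ℝ,
      (∀ x ∈ Dc ε, ‖x‖ = 1 → uRc u x = f (1 + x 2) ∧ rho x * uTc u x = U (1 + x 2) ∧
        rho x * uPc u x = W (1 + x 2)) ∧
      (∀ s ∈ Set.Ioo 0 ε, HasDerivAt U (f s) s) ∧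
      (∀ s ∈ Set.Ioo 0 ε, HasDerivAt f (f1 s) s) ∧
      (∀ s ∈ Set.Ioo 0 ε, HasDerivAt f1 (f2 s) s) ∧
      (∀ s ∈ Set.Ioo 0 ε, HasDerivAt W (W1 s) s) ∧
      (∀ s ∈ Set.Ioo 0 ε, HasDerivAt W1 (W2 s) s) ∧
      (∀ s ∈ Set.Ioo 0 ε, s * (2 - s) * W2 s + U s * W1 s = 0) ∧
      (∀ s ∈ Set.Ioo 0 ε, HasDerivAt
        (fun s => s * (2 - s) * f2 s + 2 * (1 - s) * f1 s + 2 * f s + f s ^ 2 + U s * f1 s)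
        (-2 * W s * W1 s / (s * (2 - s))) s) := by
  have ha : ∀ s ∈ Set.Ioo 0 ε, 0 < s * (2 - s) := fun s hs => mul_pos hs.1 (by linarith [hs.2])
  have hXn : ∀ s ∈ Set.Ioo 0 ε, ‖Xs s‖ = 1 := fun s hs => Xs_norm hs.1.le (by linarith [hs.2])
  have hXm : ∀ s ∈ Set.Ioo 0 ε, Xs s ∈ Dc ε := fun s hs => Xs_mem hε hs
  have hopen := Dc_open ε
  have hcu : ∀ x ∈ Dc ε, ∀ i, ContDiffAt ℝ 2 (fun z => u z i) x := by
    intro x hx i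
    have := (hu_reg.mono hC).contDiffAt (hopen.mem_nhds hx)
    rw [contDiffAt_euclidean] at this
    exact this i
  have hcp : ∀ x ∈ Dc ε, DifferentiableAt ℝ p x := fun x hx =>
    ((hp_reg.mono hC).contDiffAt (hopen.mem_nhds hx)).differentiableAt (by norm_num)
  set v : Fin 3 → ℝ → ℝ := fun i s => u (Xs s) i with hv
  have hvc : ∀ i, ∀ s ∈ Set.Ioo 0 ε, ContDiffAt ℝ 2 (v i) s := fun i s hs =>
    ContDiffAt.comp s (hcu _ (hXm s hs) i) (cd_Xs (ha s hs))
  have hXc : ∀ i, ∀ s ∈ Set.Ioo 0 ε, ContDiffAt ℝ 2 (fun s => Xs s i) s := fun i s hs =>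
    contDiffAt_euclidean.mp (cd_Xs (ha s hs)) i
  set f : ℝ → ℝ := fun s => v 0 s * Xs s 0 + v 1 s * Xs s 1 + v 2 s * Xs s 2 with hfdef
  set W : ℝ → ℝ := fun s => v 1 s * Xs s 0 - v 0 s * Xs s 1 with hWdef
  set h : ℝ → ℝ := v 2 with hhdef
  have hfc : ∀ s ∈ Set.Ioo 0 ε, ContDiffAt ℝ 2 f s := fun s hs =>
    (((hvc 0 s hs).mul (hXc 0 s hs)).add ((hvc 1 s hs).mul (hXc 1 s hs))).add
      ((hvc 2 s hs).mul (hXc 2 s hs))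
  have hWc : ∀ s ∈ Set.Ioo 0 ε, ContDiffAt ℝ 2 W s := fun s hs =>
    ((hvc 1 s hs).mul (hXc 0 s hs)).sub ((hvc 0 s hs).mul (hXc 1 s hs))
  have hhc : ∀ s ∈ Set.Ioo 0 ε, ContDiffAt ℝ 2 h s := hvc 2
  set U : ℝ → ℝ := fun s => (s - 1) * f s - h s with hUdef
  -- identification at unit points
  have hunit : ∀ x ∈ Dc ε, ‖x‖ = 1 → 1 + x 2 ∈ Set.Ioo 0 ε ∧
      u x 0 * x 0 + u x 1 * x 1 + u x 2 * x 2 = f (1 + x 2) ∧ u x 2 = h (1 + x 2) ∧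
      u x 1 * x 0 - u x 0 * x 1 = W (1 + x 2) := by
    intro x hx hn
    have hR : Ri x = 1 := by simp [Ri, hn]
    have hS : Sg x = 1 + x 2 := by simp [Sg, hR]
    have hs := Sg_mem hx
    rw [hS] at hs
    have hX2 : x 2 = Xs (1 + x 2) 2 := by rw [Xs2]; ring
    have hXD := hXm _ hs
    have hXN := hXn _ hs
    obtain ⟨e1, e2, e3⟩ := haxi x (hC hx) (Xs (1 + x 2)) (hC hXD) (by rw [hn, hXN]) hX2
    have hrho := rho_eq hn hXN hX2
    obtain ⟨a1, a2, a3⟩ := unit_comp (u := u) hn hx.1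
    obtain ⟨b1, b2, b3⟩ := unit_comp (u := u) hXN hXD.1
    have c1 : u x 0 * x 0 + u x 1 * x 1 + u x 2 * x 2 = f (1 + x 2) := by
      rw [← a1, e1, b1]
    refine ⟨hs, c1, ?_, ?_⟩
    · rw [hrho, e2, b2, ← hX2, c1] at a2
      have : f (1 + x 2) = u (Xs (1 + x 2)) 0 * Xs (1 + x 2) 0 + u (Xs (1 + x 2)) 1 * Xs (1 + x 2) 1
        + u (Xs (1 + x 2)) 2 * x 2 := by rw [hfdef]; simp only [hv]; rw [← hX2]
      rw [← this] at a2
      have hh' : h (1 + x 2) = u (Xs (1 + x 2)) 2 := rfl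
      rw [hh']
      linarith
    · rw [← a3, hrho, e3, b3]
  -- identification on the cone
  have hcone : ∀ x ∈ Dc ε, u x 0 * x 0 + u x 1 * x 1 + u x 2 * x 2 = f (Sg x) ∧
      u x 2 = h (Sg x) * Ri x ∧ u x 1 * x 0 - u x 0 * x 1 = W (Sg x) := by
    intro x hx
    obtain ⟨hm, hn, h2⟩ := unit_mem hx
    obtain ⟨-, c1, c2, c3⟩ := hunit _ hm hn
    have hRp : 0 < Ri x := inv_pos.mpr (norm_pos_iff.mpr (Dc_ne hx))
    have hS : 1 + (Ri x • x) 2 = Sg x := by rw [h2]; ring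
    rw [hS, hu_hom x (hC hx) _ hRp] at c1 c2 c3
    simp only [PiLp.smul_apply, smul_eq_mul] at c1 c2 c3
    refine ⟨?_, ?_, ?_⟩
    · rw [← c1]; field_simp
    · rw [← c2]; field_simp
    · rw [← c3]; field_simp
  have ev : ∀ s ∈ Set.Ioo 0 ε, ∀ᶠ t in 𝓝 s, t ∈ Set.Ioo 0 ε := fun s hs =>
    isOpen_Ioo.mem_nhds hs
  have evD : ∀ x ∈ Dc ε, ∀ᶠ z in 𝓝 x, z ∈ Dc ε := fun x hx => hopen.mem_nhds hx
  have main : ∀ x ∈ Dc ε, ‖x‖ = 1 → _ := fun x hx hn =>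
    have hs := (hunit x hx hn).1
    core_point (f := f) (f1 := deriv f) (f2 := deriv (deriv f)) (h := h) (h1 := deriv h)
      (h2 := deriv (deriv h)) (W := W) (W1 := deriv W) (W2 := deriv (deriv W)) hn hx.1
      (hcu x hx) (hcp x hx) (hNS x (hC hx))
      ((ev _ hs).mono fun t ht => (two_derivs (hfc t ht)).1) (two_derivs (hfc _ hs)).2
      ((ev _ hs).mono fun t ht => (two_derivs (hhc t ht)).1) (two_derivs (hhc _ hs)).2
      ((ev _ hs).mono fun t ht => (two_derivs (hWc t ht)).1) (two_derivs (hWc _ hs)).2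
      ((evD x hx).mono fun z hz => (hcone z hz).1)
      ((evD x hx).mono fun z hz => (hcone z hz).2.1)
      ((evD x hx).mono fun z hz => (hcone z hz).2.2)
  set P : ℝ → ℝ := fun s => p (Xs s) with hPdef
  -- radial equation
  have hrad : ∀ x ∈ Dc ε, ‖x‖ = 1 → (1 - x 2 ^ 2) * (2 * p x) =
      (1 - x 2 ^ 2) * (-((1 - x 2 ^ 2) * deriv (deriv f) (1 + x 2) - 2 * x 2 * deriv f (1 + x 2))
      - deriv f (1 + x 2) * U (1 + x 2) - f (1 + x 2) ^ 2) - (U (1 + x 2) ^ 2 + W (1 + x 2) ^ 2) := by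
    intro x hx hn
    obtain ⟨-, m1, -, -, a1, a2, a3⟩ := main x hx hn
    rw [euler_p (hcp x hx) (hp_hom x (hC hx))] at m1
    have hsq : x 0 ^ 2 + x 1 ^ 2 + x 2 ^ 2 = 1 := by rw [← normsq, hn]; norm_num
    have hUe : U (1 + x 2) = x 2 * f (1 + x 2) - h (1 + x 2) := by simp only [hUdef]; ring
    rw [hUe, ← a1, ← a2, ← a3]
    rw [← a1, ← a2] at m1
    linear_combination (-(1 - x 2 ^ 2)) * m1 + (u x 0 ^ 2 + u x 1 ^ 2) * hsq
  have hpunit : ∀ x ∈ Dc ε, ‖x‖ = 1 → p x = P (1 + x 2) := by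
    intro x hx hn
    have hs := (hunit x hx hn).1
    have hX2 : Xs (1 + x 2) 2 = x 2 := by rw [Xs2]; ring
    have r1 := hrad x hx hn
    have r2 := hrad _ (hXm _ hs) (hXn _ hs)
    rw [hX2, ← r1] at r2
    have hpos : 0 < 1 - x 2 ^ 2 := by
      have := ha _ hs
      linarith
    have := mul_left_cancel₀ hpos.ne' r2
    simp only [hPdef]
    linarith
  have hpcone : ∀ x ∈ Dc ε, p x = P (Sg x) * (Ri x * Ri x) := by
    intro x hx
    obtain ⟨hm, hn, h2⟩ := unit_mem hx
    have c1 := hpunit _ hm hn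
    have hRp : 0 < Ri x := inv_pos.mpr (norm_pos_iff.mpr (Dc_ne hx))
    have hS : 1 + (Ri x • x) 2 = Sg x := by rw [h2]; ring
    rw [hS, hp_hom x (hC hx) _ hRp] at c1
    rw [← c1]; field_simp
  have hPd : ∀ s ∈ Set.Ioo 0 ε, HasDerivAt P (deriv P s) s := fun s hs =>
    (DifferentiableAt.comp s (hcp _ (hXm s hs))
      ((cd_Xs (ha s hs)).differentiableAt (by norm_num))).hasDerivAt
  have hpd : ∀ x ∈ Dc ε, ‖x‖ = 1 → ∀ j, pd j p x =
      deriv P (1 + x 2) * (dl j - x 2 * x j) - 2 * x j * P (1 + x 2) := by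
    intro x hx hn j
    have hR : Ri x = 1 := by simp [Ri, hn]
    have hS : Sg x = 1 + x 2 := by simp [Sg, hR]
    have hr := pd_ri j (Dc_ne hx) hn
    have := (((pd_comp j (Dc_ne hx) hn (hPd _ (hunit x hx hn).1)).mul (hr.mul hr)).congr
      (g := p) ((evD x hx).mono fun z hz => hpcone z hz)).eq
    rw [this, hR, hS]
    ring
  have all : ∀ s ∈ Set.Ioo 0 ε, deriv h s = (s - 1) * deriv f s ∧
      (s * (2 - s) * (2 * P s) = s * (2 - s) * (-(s * (2 - s) * deriv (deriv f) s
        + 2 * (1 - s) * deriv f s) - deriv f s * U s - f s ^ 2) - (U s ^ 2 + W s ^ 2)) ∧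
      (-(s * (2 - s) * deriv (deriv h) s + 2 * (1 - s) * deriv h s)
        - deriv h s * U s - h s * f s + (deriv P s * (s * (2 - s)) + 2 * (1 - s) * P s) = 0) ∧
      s * (2 - s) * deriv (deriv W) s + U s * deriv W s = 0 := by
    intro s hs
    obtain ⟨m1, -, m3, m4, -⟩ := main _ (hXm s hs) (hXn s hs)
    have m2 := hrad _ (hXm s hs) (hXn s hs)
    have m5 := hpunit _ (hXm s hs) (hXn s hs)
    have q := hpd _ (hXm s hs) (hXn s hs)
    have e : 1 + (s - 1) = s := by ring
    rw [q 2] at m3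
    rw [q 0, q 1] at m4
    rw [m5] at m2
    rw [Xs2, e] at m1 m2 m3 m4
    rw [Xs1] at m4
    simp [dl] at m3 m4
    refine ⟨m1, ?_, ?_, ?_⟩
    · linear_combination m2
    · simp only [hUdef]
      linear_combination m3
    · simp only [hUdef]
      linear_combination -m4
  have hUd : ∀ s ∈ Set.Ioo 0 ε, HasDerivAt U (f s) s := by
    intro s hs
    have := (((hasDerivAt_id s).sub_const 1).mul (two_derivs (hfc s hs)).1).sub
      (two_derivs (hhc s hs)).1
    exact this.congr_deriv (by rw [(all s hs).1]; simp)
  refine ⟨U, f, deriv f, deriv (deriv f), W, deriv W, deriv (deriv W), ?_, hUd,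
    fun s hs => (two_derivs (hfc s hs)).1, fun s hs => (two_derivs (hfc s hs)).2,
    fun s hs => (two_derivs (hWc s hs)).1, fun s hs => (two_derivs (hWc s hs)).2,
    fun s hs => (all s hs).2.2.2, ?_⟩
  · intro x hx hn
    obtain ⟨-, c1, c2, c3⟩ := hunit x hx hn
    obtain ⟨a1, a2, a3⟩ := unit_comp (u := u) hn hx.1
    refine ⟨by rw [a1, c1], ?_, by rw [a3, c3]⟩
    rw [a2, c1, c2]; simp only [hUdef]; ring
  · intro s hs
    have hP := hPd s hs
    have hf' := (two_derivs (hfc s hs)).1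
    have hW' := (two_derivs (hWc s hs)).1
    have has := ha s hs
    have hh2 : deriv (deriv h) s = deriv f s + (s - 1) * deriv (deriv f) s := by
      have h1 := (((hasDerivAt_id s).sub_const 1).mul (two_derivs (hfc s hs)).2)
      have h2 := (two_derivs (hhc s hs)).2.unique (h1.congr_of_eventuallyEq
        ((ev s hs).mono fun t ht => (all t ht).1))
      rw [h2]; simp
    have hda : HasDerivAt (fun s : ℝ => s * (2 - s)) (2 * (1 - s)) s :=
      ((hasDerivAt_id s).mul ((hasDerivAt_id s).const_sub 2)).congr_deriv (by simp; ring)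
    have hD : HasDerivAt (fun s => 2 * f s - (U s ^ 2 + W s ^ 2) / (s * (2 - s)) - 2 * P s)
        (-2 * W s * deriv W s / (s * (2 - s))) s := by
      have := ((hf'.const_mul 2).sub ((((hUd s hs).pow 2).add (hW'.pow 2)).div hda has.ne')).sub
        (hP.const_mul 2)
      refine this.congr_deriv ?_
      obtain ⟨a1, a2, a3, -⟩ := all s hs
      rw [hh2, a1] at a3
      have hh0 : h s = (s - 1) * f s - U s := by simp only [hUdef]; ring
      rw [hh0] at a3
      simp only [Pi.add_apply, Pi.pow_apply]
      generalize deriv (deriv f) s = F2 at *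
      generalize deriv P s = P1 at *
      generalize deriv W s = V1 at *
      generalize deriv f s = F1 at *
      generalize s * (2 - s) = A at *
      have key : A * A * P1 = A * A * F1 - A * (U s * f s) + (1 - s) * (U s ^ 2 + W s ^ 2) := by
        linear_combination A * a3 - (1 - s) * a2
      have hA : A ≠ 0 := has.ne'
      field_simp
      linear_combination (-2) * key
    refine hD.congr_of_eventuallyEq ((ev s hs).mono fun t ht => ?_)
    have a2 := (all t ht).2.1
    have hat := (ha t ht).ne'
    have : (U t ^ 2 + W t ^ 2) / (t * (2 - t)) = -(t * (2 - t) * deriv (deriv f) t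
        + 2 * (1 - t) * deriv f t) - deriv f t * U t - f t ^ 2 - 2 * P t := by
      rw [div_eq_iff hat]; linarith
    simp only [this]
    ring


theorem Xs_tendsto : Tendsto Xs (𝓝[>] 0) (𝓝[sphere2 \ {S3}] S3) := by
  have hX0 : Xs 0 = S3 := by
    ext i; fin_cases i <;> simp [Xs, S3]
  have hc : Continuous Xs := by
    have : Continuous (fun s : ℝ => ![√(s * (2 - s)), 0, s - 1]) := by
      refine continuous_pi fun i => ?_
      fin_cases i <;> simp <;> fun_prop
    exact (PiLp.continuous_toLp 2 _).comp this
  refine tendsto_nhdsWithin_iff.mpr ⟨?_, ?_⟩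
  · rw [← hX0]
    exact tendsto_nhdsWithin_of_tendsto_nhds hc.continuousAt
  · filter_upwards [Ioo_mem_nhdsGT (show (0:ℝ) < 1 by norm_num)] with s hs
    refine ⟨?_, ?_⟩
    · rw [sphere2, mem_sphere_zero_iff_norm]
      exact Xs_norm hs.1.le (by linarith [hs.2])
    · intro h
      have h' : Xs s = S3 := h
      have h2 := Xs2 s
      rw [h'] at h2
      have : S3 2 = -1 := by simp [S3]
      linarith [hs.1]

theorem ev_cap {b : ℝ} (hb : 0 < b) (hb1 : b ≤ 1) :
    ∀ᶠ x in 𝓝[sphere2 \ {S3}] S3, x ∈ Dc b ∧ ‖x‖ = 1 := by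
  have hS : S3 2 = -1 := by simp [S3]
  have hc : ContinuousAt (fun x : V3 => x 2) S3 :=
    (EuclideanSpace.proj 2 : V3 →L[ℝ] ℝ).continuous.continuousAt
  have h1 : ∀ᶠ x in 𝓝[sphere2 \ {S3}] S3, x 2 < b - 1 :=
    (hc.eventually (gt_mem_nhds (show S3 2 < b - 1 by rw [hS]; linarith))).filter_mono
      nhdsWithin_le_nhds
  filter_upwards [h1, self_mem_nhdsWithin] with x hx hm
  have hn : ‖x‖ = 1 := by
    have := hm.1
    rwa [sphere2, mem_sphere_zero_iff_norm] at this
  refine ⟨⟨?_, by rw [hn]; linarith⟩, hn⟩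
  by_contra hq
  have hsq := normsq x
  rw [hn] at hsq
  have h0 : x 0 = 0 := by nlinarith [sq_nonneg (x 0), sq_nonneg (x 1)]
  have h1 : x 1 = 0 := by nlinarith [sq_nonneg (x 0), sq_nonneg (x 1)]
  have h2 : x 2 = -1 := by
    rw [h0, h1] at hsq
    nlinarith
  apply hm.2
  change x = S3
  ext i; fin_cases i <;> simp [S3, h0, h1, h2]

/-- when `τ ≥ 3`, `|x'| u_φ` is constant and `|x'| u_θ`, `u_r` are real
analytic in `1 + cos θ` near `S`. -/
theorem expansion_tau_ge_three (δ : ℝ) (hδ : 0 < δ) (u : V3 → V3) (p : V3 → ℝ)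
    (hu_hom : ∀ x ∈ cone3 (NSCap δ), ∀ lam : ℝ, 0 < lam → u (lam • x) = lam⁻¹ • u x)
    (hp_hom : ∀ x ∈ cone3 (NSCap δ), ∀ lam : ℝ, 0 < lam → p (lam • x) = (lam ^ 2)⁻¹ * p x)
    (hu_reg : ContDiffOn ℝ 2 u (cone3 (NSCap δ)))
    (hp_reg : ContDiffOn ℝ 1 p (cone3 (NSCap δ)))
    (haxi : AxisymOn u (cone3 (NSCap δ)))
    (hNS : ∀ x ∈ cone3 (NSCap δ), NSEq u p x)
    (τ : ℝ) (hτ : Tendsto (fun x => rho x * uTc u x) (𝓝[sphere2 \ {S3}] S3) (𝓝 τ))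
    (hτ3 : 3 ≤ τ) :
    (∃ c : ℝ, ∀ᶠ x in 𝓝[sphere2 \ {S3}] S3, rho x * uPc u x = c) ∧
    (∃ (g1 g2 : ℝ → ℝ) (r : ℝ), 0 < r ∧
      AnalyticOnNhd ℝ g1 (Metric.ball (0:ℝ) r) ∧
      AnalyticOnNhd ℝ g2 (Metric.ball (0:ℝ) r) ∧
      ∀ᶠ x in 𝓝[sphere2 \ {S3}] S3,
        rho x * uTc u x = g1 (1 + x 2) ∧ uRc u x = g2 (1 + x 2)) := by
  have hε0 : 0 < min 1 (δ ^ 2 / 2) := lt_min one_pos (by positivity)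
  obtain ⟨ε, hεdef⟩ : ∃ ε, ε = min 1 (δ ^ 2 / 2) := ⟨_, rfl⟩
  rw [← hεdef] at hε0
  have hε1 : ε ≤ 1 := hεdef ▸ min_le_left _ _
  have hε2 : 2 * ε ≤ δ ^ 2 := by
    have : ε ≤ δ ^ 2 / 2 := hεdef ▸ min_le_right _ _
    linarith
  obtain ⟨U, f, f1, f2, W, W1, W2, hid, hU, hf, hf1, hW, hW1, hode, hF⟩ :=
    reduction hε1 (Dc_sub hδ hε2) hu_hom hp_hom hu_reg hp_reg haxi hNS
  have hUτ : Tendsto U (𝓝[>] 0) (𝓝 τ) := by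
    refine (hτ.comp Xs_tendsto).congr' ?_
    filter_upwards [Ioo_mem_nhdsGT hε0] with s hs
    have := (hid (Xs s) (Xs_mem hε1 hs) (Xs_norm hs.1.le (by linarith [hs.2]))).2.1
    simp only [Function.comp]
    rw [this, Xs2]
    congr 1
    ring
  have hsub : ∀ s ∈ Set.Ioc 0 (ε / 2), s ∈ Set.Ioo 0 ε := fun s hs =>
    ⟨hs.1, by linarith [hs.2]⟩
  obtain ⟨c, g1, g2, r, b', hr, hb', hbb, hg1, hg2, hall⟩ :=
    ode_main (b := ε / 2) (by linarith) (by linarith) hτ3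
      (fun s hs => hU s (hsub s hs)) (fun s hs => hf s (hsub s hs))
      (fun s hs => hf1 s (hsub s hs)) (fun s hs => hW s (hsub s hs))
      (fun s hs => hW1 s (hsub s hs)) (fun s hs => hode s (hsub s hs))
      (fun s hs => hF s (hsub s hs)) hUτ
  have hev := ev_cap hb' (by linarith : b' ≤ 1)
  have hfin : ∀ x : V3, x ∈ Dc b' ∧ ‖x‖ = 1 → rho x * uPc u x = c ∧
      rho x * uTc u x = g1 (1 + x 2) ∧ uRc u x = g2 (1 + x 2) := by
    rintro x ⟨hx, hn⟩
    have hR : Ri x = 1 := by simp [Ri, hn]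
    have hS : Sg x = 1 + x 2 := by simp [Sg, hR]
    have hs := Sg_mem hx
    rw [hS] at hs
    have hx2 := hx.2
    rw [hn] at hx2
    have hxε : x ∈ Dc ε := ⟨hx.1, by rw [hn]; linarith⟩
    obtain ⟨a1, a2, a3⟩ := hid x hxε hn
    obtain ⟨d1, d2, d3⟩ := hall _ hs
    exact ⟨by rw [a3, d1], by rw [a2, d2], by rw [a1, d3]⟩
  exact ⟨⟨c, hev.mono fun x hx => (hfin x hx).1⟩,
    ⟨g1, g2, r, hr, hg1, hg2, hev.mono fun x hx => (hfin x hx).2⟩⟩
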